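/- arXiv:2009.13713 — 4 statements merged into one kernel-verified Lean document; each statement's English description precedes it below -/
import Mathlib

section
/- Let (X, d) be a metric space with a finite Borel measure μ, and let (X, B, μ, f) be a measurable system. If the set of recurrent points of f has μ-measure zero, then f satisfies the Summability Condition (SC). -/
open MeasureTheory Set Filter
open scoped ENNReal NNReal

/-- The image of a set under the `n`-th power (`n ∈ ℤ`) of a bijection `f`. -/
def zimg {X : Type*} (f : X → X) (n : ℤ) (B : Set X) : Set X :=
  if 0 ≤ n then f^[n.toNat] '' B else f^[(-n).toNat] ⁻¹' B

/-- `W` is a wandering set for `f`: the sets `fⁿ(W)`, `n ∈ ℤ`, are pairwise disjoint. -/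
def Wandering {X : Type*} (f : X → X) (W : Set X) : Prop :=
  Pairwise fun m n : ℤ => Disjoint (zimg f m W) (zimg f n W)

/-- `W` generates `X`: `X = ⋃_{n ∈ ℤ} fⁿ(W)`. -/
def GeneratedBy {X : Type*} (f : X → X) (W : Set X) : Prop :=
  (⋃ n : ℤ, zimg f n W) = Set.univ

/-- The Summability Condition (SC). -/
def SCcond {X : Type*} [MeasurableSpace X] (μ : Measure X) (f : X → X) : Prop :=
  ∀ ε : ℝ≥0∞, 0 < ε → ∀ B : Set X, MeasurableSet B → μ B < ⊤ →
    ∃ B' : Set X, B' ⊆ B ∧ MeasurableSet B' ∧ μ (B \ B') < ε ∧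
      ∑' n : ℤ, μ (zimg f n B') ≠ ⊤

/-- A measurable system: `μ` σ-finite with `μ(X) > 0`, `f` bijective, bimeasurable,
nonsingular, and `μ(f⁻¹(B)) ≤ c·μ(B)` with `0 < c < ∞`. -/
def MeasSystem {X : Type*} [MeasurableSpace X] (μ : Measure X) (f : X → X) (c : ℝ≥0∞) : Prop :=
  SigmaFinite μ ∧ 0 < μ Set.univ ∧ Function.Bijective f ∧ Measurable f ∧
  (∀ B : Set X, MeasurableSet B → MeasurableSet (f '' B)) ∧
  (∀ B : Set X, MeasurableSet B → (μ (f ⁻¹' B) = 0 ↔ μ B = 0)) ∧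
  0 < c ∧ c ≠ ⊤ ∧ (∀ B : Set X, MeasurableSet B → μ (f ⁻¹' B) ≤ c * μ B)

/-- `f` is dissipative: there is a generating wandering set. -/
def Dissipative {X : Type*} [MeasurableSpace X] (f : X → X) : Prop :=
  ∃ W : Set X, MeasurableSet W ∧ Wandering f W ∧ GeneratedBy f W

/-- A set of natural numbers has positive lower density. -/
def PosLowerDensity (A : Set ℕ) : Prop :=
  0 < Filter.liminf (fun N : ℕ => ((A ∩ Set.Icc 1 N).ncard : ℝ) / N) Filter.atTop

/-- `x` is a recurrent point of `f`. -/
def Recurrent {X : Type*} [TopologicalSpace X] (f : X → X) (x : X) : Prop :=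
  ∀ U : Set X, IsOpen U → x ∈ U → ∃ n : ℕ, 1 ≤ n ∧ f^[n] x ∈ U

/-- A continuous linear operator is frequently hypercyclic. -/
def FreqHC {E : Type*} [NormedAddCommGroup E] [NormedSpace ℝ E] (T : E →L[ℝ] E) : Prop :=
  ∃ φ : E, ∀ U : Set E, IsOpen U → U.Nonempty → PosLowerDensity {n : ℕ | (T ^ n) φ ∈ U}

/-- `d(W) = ‖dμ/dν |_W‖_∞⁻¹`, with the convention `1/∞ = 0`. -/
noncomputable def dSeq {X : Type*} [MeasurableSpace X] (μ ν : Measure X) (W : Set X) : ℝ≥0∞ :=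
  (essSup (μ.rnDeriv ν) (μ.restrict W))⁻¹


theorem ulam_aux {ι : Type*} [LinearOrder ι] (hc : ∀ i : ι, (Iio i).Countable)
    (m : @Measure ι ⊤) (hm : @IsFiniteMeasure ι ⊤ m) : ∃ D : Set ι, D.Countable ∧ m Dᶜ = 0 := by
  let _ : MeasurableSpace ι := ⊤
  have := hm
  have hD : {i : ι | 0 < m {i}}.Countable :=
    Measure.countable_meas_pos_of_disjoint_iUnion (μ := m) (fun i => trivial)
      (fun i j hij => by simpa [Function.onFun] using hij)
  set D := {i : ι | 0 < m {i}} with hDdef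
  refine ⟨D, hD, ?_⟩
  by_contra hpos
  have hnull : ∀ C : Set ι, C.Countable → m.restrict Dᶜ C = 0 := by
    intro C hC
    rw [Measure.restrict_apply (show MeasurableSet C from trivial)]
    have h1 : (C ∩ Dᶜ).Countable := hC.mono inter_subset_left
    rw [← biUnion_of_singleton (C ∩ Dᶜ)]
    refine (measure_biUnion_null_iff h1).2 ?_
    rintro i ⟨-, hi⟩
    simpa [hDdef] using hi
  have huniv : m.restrict Dᶜ univ ≠ 0 := by simpa using hpos
  choose g hg using fun i => (Set.countable_iff_exists_injOn).1 (hc i)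
  let A : ℕ → ι → Set ι := fun n η => {ξ | η < ξ ∧ g ξ η = n}
  have hex : ∀ η, ∃ n, 0 < m.restrict Dᶜ (A n η) := by
    intro η
    by_contra! hcon
    apply huniv
    have hcov : (univ : Set ι) ⊆ (Iio η ∪ {η}) ∪ ⋃ n, A n η := by
      intro ξ _
      rcases lt_trichotomy ξ η with h | h | h
      · exact Or.inl (Or.inl h)
      · exact Or.inl (Or.inr h)
      · exact Or.inr (mem_iUnion.2 ⟨g ξ η, h, rfl⟩)
    refine measure_mono_null hcov (measure_union_null ?_ ?_)
    · exact hnull _ ((hc η).union (countable_singleton η))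
    · exact measure_iUnion_null fun n => le_antisymm (hcon n) (zero_le)
  choose k hk using hex
  have hcount : ∀ n, {η | k η = n}.Countable := by
    intro n
    have := Measure.countable_meas_pos_of_disjoint_iUnion (μ := m.restrict Dᶜ)
      (As := A n) (fun i => trivial) (by
        intro a b hab
        rw [Function.onFun, Set.disjoint_left]
        rintro ξ ⟨h1, h2⟩ ⟨h3, h4⟩
        exact hab (hg ξ h1 h3 (h2.trans h4.symm)))
    refine this.mono ?_
    rintro η rfl
    exact hk η
  apply huniv
  apply hnull
  have : (univ : Set ι) = ⋃ n, {η | k η = n} := by ext; simp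
  rw [this]
  exact countable_iUnion hcount

/-- `p` is nicely indexed: closed families glue to measurable sets. -/
def NiceIdx {X : Type*} [TopologicalSpace X] [MeasurableSpace X] (p : X → X) : Prop :=
  ∀ G : X → Set X, (∀ y, IsClosed (G y)) → MeasurableSet {x | x ∈ G (p x)}

theorem NiceIdx.preimage {X : Type*} [TopologicalSpace X] [MeasurableSpace X] {p : X → X}
    (hp : NiceIdx p) (S : Set X) : MeasurableSet (p ⁻¹' S) := by
  classical
  have := hp (fun y => if y ∈ S then univ else ∅) (by intro y; split_ifs <;> simp)
  convert this using 1
  ext x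
  by_cases h : p x ∈ S <;> simp [h]

theorem countable_Iio_of_lt_omega_one {i : Ordinal.{0}} (hi : i < Ordinal.omega 1) :
    (Iio i).Countable := by
  rw [← Cardinal.le_aleph0_iff_set_countable, Cardinal.mk_Iio_ordinal]
  have h1 : i.card < Cardinal.aleph 1 := by
    rw [← Ordinal.card_omega, ← Cardinal.lt_ord] at *
    simpa using hi
  rw [← Cardinal.lift_aleph0.{1,0}, Cardinal.lift_le]
  rw [← Cardinal.succ_aleph0, Order.lt_succ_iff] at h1
  exact h1

theorem NiceIdx.glue {X : Type*} [TopologicalSpace X] [MeasurableSpace X] {p : X → X}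
    (hp : NiceIdx p) (i : Ordinal.{0}) (hi : i < Ordinal.omega 1) :
    ∀ G : X → Set X,
    (∀ y, G y ∈ MeasurableSpace.generateMeasurableRec {s : Set X | IsClosed s} i) →
      MeasurableSet {x | x ∈ G (p x)} := by
  classical
  induction i using WellFoundedLT.induction with
  | ind i IH =>
  have key : ∀ H : X → Set X, (∀ y, ∃ j < i, H y ∈
      MeasurableSpace.generateMeasurableRec {s : Set X | IsClosed s} j) →
      MeasurableSet {x | x ∈ H (p x)} := by
    intro H hH
    choose j hj hHj using hH
    have : {x | x ∈ H (p x)} =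
        ⋃ k ∈ Iio i, {x | x ∈ (fun y => if j y = k then H y else ∅) (p x)} := by
      ext x
      simp only [mem_ofPred_eq, mem_iUnion, mem_Iio]
      constructor
      · intro h
        exact ⟨j (p x), hj _, by simpa using h⟩
      · rintro ⟨k, _, h⟩
        split_ifs at h with h2
        · exact h
        · exact h.elim
    rw [this]
    refine MeasurableSet.biUnion (countable_Iio_of_lt_omega_one hi) ?_
    intro k hk
    refine IH k hk (lt_trans hk hi) (fun y => if j y = k then H y else ∅) ?_
    intro y
    split_ifs with h
    · exact h ▸ hHj y
    · exact MeasurableSpace.empty_mem_generateMeasurableRec _ _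
  intro G hG
  have hcase : ∀ y, IsClosed (G y) ∨
      (∃ t, (∃ j < i, t ∈ MeasurableSpace.generateMeasurableRec {s : Set X | IsClosed s} j) ∧
        G y = tᶜ) ∨
      (∃ t : ℕ → Set X, (∀ n, ∃ j < i, t n ∈
        MeasurableSpace.generateMeasurableRec {s : Set X | IsClosed s} j) ∧ G y = ⋃ n, t n) := by
    intro y
    have h := hG y
    unfold MeasurableSpace.generateMeasurableRec at h
    rcases h with ((ht | ht) | ⟨t, ht, h2⟩) | ⟨t, ht⟩
    · exact Or.inl ht
    · left
      rw [mem_singleton_iff] at ht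
      rw [ht]; exact isClosed_empty
    · right; left
      obtain ⟨j, hj, hj'⟩ := mem_iUnion₂.1 ht
      exact ⟨t, ⟨j, hj, hj'⟩, h2.symm⟩
    · right; right
      refine ⟨fun n => (t n).1, ?_, ht.symm⟩
      intro n
      obtain ⟨j, hj, hj'⟩ := mem_iUnion₂.1 (t n).2
      exact ⟨j, hj, hj'⟩
  by_cases hi0 : i = 0
  · apply hp
    intro y
    subst hi0
    rcases hcase y with h | ⟨t, ⟨j, hj, -⟩, -⟩ | ⟨t, ht, -⟩
    · exact h
    · exact absurd hj (not_lt_bot)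
    · obtain ⟨j, hj, -⟩ := ht 0
      exact absurd hj (not_lt_bot)
  have hi0' : 0 < i := pos_iff_ne_zero.2 hi0
  have hemp : ∃ j < i, (∅ : Set X) ∈
      MeasurableSpace.generateMeasurableRec {s : Set X | IsClosed s} j :=
    ⟨0, hi0', MeasurableSpace.empty_mem_generateMeasurableRec _ _⟩
  -- uniform representation
  have hrep : ∀ y, ∃ (b : Bool) (t : ℕ → Set X), (∀ n, ∃ j < i, t n ∈
        MeasurableSpace.generateMeasurableRec {s : Set X | IsClosed s} j) ∧
        G y = if b then (t 0)ᶜ else ⋃ n, t n := by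
    intro y
    rcases hcase y with h | ⟨t, ht, h⟩ | ⟨t, ht, h⟩
    · refine ⟨false, fun _ => G y, fun _ => ⟨0, hi0',
        MeasurableSpace.self_subset_generateMeasurableRec _ _ h⟩, ?_⟩
      simp [iUnion_const]
    · exact ⟨true, fun _ => t, fun _ => ht, by simpa using h⟩
    · exact ⟨false, t, ht, by simpa using h⟩
  choose b t ht hGt using hrep
  have : {x | x ∈ G (p x)} =
      (p ⁻¹' {y | b y = true} ∩ {x | x ∈ t (p x) 0}ᶜ) ∪
      (p ⁻¹' {y | b y = false} ∩ ⋃ n, {x | x ∈ t (p x) n}) := by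
    ext x
    simp only [mem_ofPred_eq]
    rw [hGt (p x)]
    rcases hb : b (p x) <;> simp [hb]
  rw [this]
  exact ((hp.preimage _).inter (key _ fun y => ht y 0).compl).union
    ((hp.preimage _).inter (MeasurableSet.iUnion fun n => key _ fun y => ht y n))

theorem NiceIdx.nullMeasurable {X : Type*} [TopologicalSpace X] [MeasurableSpace X]
    [BorelSpace X] {p : X → X} (hp : NiceIdx p) (μ : Measure X) [IsFiniteMeasure μ]
    (G : X → Set X) (hG : ∀ y, MeasurableSet (G y)) :
    NullMeasurableSet {x | x ∈ G (p x)} μ := by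
  classical
  have hr : ∀ y, ∃ i : Iio (Ordinal.omega.{0} 1), G y ∈
      MeasurableSpace.generateMeasurableRec {s : Set X | IsClosed s} i.1 := by
    intro y
    have h := hG y
    rw [BorelSpace.measurable_eq (α := X), borel_eq_generateFrom_isClosed] at h
    have h' : G y ∈ {t | MeasurableSpace.GenerateMeasurable {s : Set X | IsClosed s} t} := h
    rw [MeasurableSpace.generateMeasurable_eq_rec.{_, 0},
      MeasurableSpace.generateMeasurableRec_omega_one, mem_iUnion₂] at h'
    obtain ⟨i, hi, h'⟩ := h'
    exact ⟨⟨i, hi⟩, h'⟩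
  choose r hr using hr
  let _ : MeasurableSpace (Iio (Ordinal.omega.{0} 1)) := ⊤
  have hmeas : Measurable (fun x => r (p x)) := fun S _ => hp.preimage (r ⁻¹' S)
  obtain ⟨D, hD, hD0⟩ := ulam_aux (ι := Iio (Ordinal.omega.{0} 1)) (by
    intro i
    have := (countable_Iio_of_lt_omega_one i.2).preimage
      (Subtype.val_injective (p := fun x => x ∈ Iio (Ordinal.omega.{0} 1)))
    exact this.mono fun x hx => hx) (μ.map fun x => r (p x)) inferInstance
  rw [Measure.map_apply hmeas trivial] at hD0
  let E : Set X := ⋃ i ∈ D, {x | x ∈ (fun y => if r y = i then G y else ∅) (p x)}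
  have hE : MeasurableSet E := by
    refine MeasurableSet.biUnion hD fun i _ => hp.glue i.1 i.2 (fun y => if r y = i then G y else ∅) ?_
    intro y
    split_ifs with h
    · exact h ▸ hr y
    · exact MeasurableSpace.empty_mem_generateMeasurableRec _ _
  refine hE.nullMeasurableSet.congr ?_
  have hae : ∀ᵐ x ∂μ, r (p x) ∈ D := by
    rw [ae_iff]; exact hD0
  filter_upwards [hae] with x hx
  apply propext
  change x ∈ E ↔ x ∈ G (p x)
  simp only [E, mem_iUnion, mem_ofPred_eq]
  constructor
  · rintro ⟨k, _, h⟩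
    split_ifs at h with h2
    · exact h
    · exact h.elim
  · intro h
    exact ⟨r (p x), hx, by simpa using h⟩

theorem exists_niceIdx {X : Type*} [MetricSpace X] [MeasurableSpace X] [BorelSpace X]
    [LinearOrder X] [WellFoundedLT X] (ε : ℝ) (hε : 0 < ε) :
    ∃ p : X → X, NiceIdx p ∧ ∀ x, dist x (p x) < ε := by
  have hne : ∀ x : X, {y | dist x y < ε}.Nonempty := fun x => ⟨x, by simpa using hε⟩
  let p : X → X := fun x => (wellFounded_lt (α := X)).min {y | dist x y < ε} (hne x)
  have hp1 : ∀ x, dist x (p x) < ε := fun x => WellFounded.min_mem _ _ (hne x)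
  have hp2 : ∀ x y, dist x y < ε → p x ≤ y := fun x y h =>
    not_lt.1 (WellFounded.not_lt_min (wellFounded_lt (α := X)) {y | dist x y < ε} h)
  refine ⟨p, ?_, hp1⟩
  intro G hG
  let C : ℕ → Set X := fun n =>
    {x | x ∈ G (p x) ∧ ∀ z, dist z x < 1 / ((n : ℝ) + 1) → dist z (p x) < ε}
  have hU : {x | x ∈ G (p x)} = ⋃ n, C n := by
    ext x
    simp only [mem_iUnion]
    constructor
    · intro hx
      obtain ⟨n, hn⟩ := exists_nat_one_div_lt (sub_pos.2 (hp1 x))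
      refine ⟨n, hx, fun z hz => ?_⟩
      have := dist_triangle z x (p x)
      linarith
    · rintro ⟨n, hx, _⟩
      exact hx
  rw [hU]
  refine MeasurableSet.iUnion fun n => IsClosed.measurableSet ?_
  apply isClosed_of_closure_subset
  intro x hx
  rw [Metric.mem_closure_iff] at hx
  set δ : ℝ := 1 / ((n : ℝ) + 1) with hδ
  have hδ0 : 0 < δ := by positivity
  obtain ⟨a, ha, hxa⟩ := hx (δ / 2) (by linarith)
  have heq : ∀ b ∈ C n, dist x b < δ / 2 → p b = p a := by
    intro b hb hxb
    have hab : dist a b < δ := by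
      have := dist_triangle_left a b x
      linarith
    apply le_antisymm
    · exact hp2 _ _ (ha.2 b (by rw [dist_comm]; exact hab))
    · exact hp2 _ _ (hb.2 a hab)
  have hpx : p x = p a := by
    apply le_antisymm
    · exact hp2 _ _ (ha.2 x (by linarith))
    · obtain ⟨b, hb, hxb⟩ := hx (min (δ / 2) (ε - dist x (p x)))
        (lt_min (by linarith) (by linarith [hp1 x]))
      rw [← heq b hb (lt_of_lt_of_le hxb (min_le_left _ _))]
      apply hp2
      have h1 := lt_of_lt_of_le hxb (min_le_right _ _)
      have h2 := dist_triangle_left b (p x) x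
      linarith
  refine ⟨?_, ?_⟩
  · rw [hpx, ← (hG (p a)).closure_eq, Metric.mem_closure_iff]
    intro r hr
    obtain ⟨b, hb, hxb⟩ := hx (min (δ / 2) r) (lt_min (by linarith) hr)
    refine ⟨b, ?_, lt_of_lt_of_le hxb (min_le_right _ _)⟩
    rw [← heq b hb (lt_of_lt_of_le hxb (min_le_left _ _))]
    exact hb.1
  · intro z hz
    obtain ⟨b, hb, hxb⟩ := hx (min (δ / 2) (δ - dist z x))
      (lt_min (by linarith) (by linarith))
    rw [hpx, ← heq b hb (lt_of_lt_of_le hxb (min_le_left _ _))]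
    apply hb.2
    have h1 := lt_of_lt_of_le hxb (min_le_right _ _)
    have h2 := dist_triangle z x b
    linarith

theorem exists_wandering_aux {X : Type*} [TopologicalSpace X] [MeasurableSpace X] [BorelSpace X]
    [LinearOrder X] [WellFoundedLT X] (μ : Measure X) [IsFiniteMeasure μ]
    (e : Equiv.Perm X) (he : ∀ n : ℤ, Measure.QuasiMeasurePreserving (⇑(e ^ n)) μ μ)
    (p : X → X) (hp : NiceIdx p) :
    ∃ W : Set X, NullMeasurableSet W μ ∧
      (∀ n : ℤ, n ≠ 0 → ∀ x ∈ W, (e ^ n) x ∉ W) ∧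
      ∀ x, (∀ n : ℤ, 0 < n → p ((e ^ n) x) ≠ p x) → ∃ n : ℤ, (e ^ n) x ∈ W := by
  let N : Set X := {x | ∀ n : ℤ, 0 < n → p ((e ^ n) x) ≠ p x}
  let W : Set X := {x | x ∈ N ∧ ∀ n : ℤ, n ≠ 0 → (e ^ n) x ∈ N → p x < p ((e ^ n) x)}
  have hN : NullMeasurableSet N μ := by
    have : N = ⋂ n : ℤ, ⋂ _ : 0 < n, {x | x ∈ (fun y => {x | p ((e ^ n) x) ≠ y}) (p x)} := by
      ext x
      simp [N]
    rw [this]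
    refine NullMeasurableSet.iInter fun n => NullMeasurableSet.iInter fun _ => ?_
    refine hp.nullMeasurable μ (fun y => {x | p ((e ^ n) x) ≠ y}) fun y => ?_
    exact (he n).measurable (hp.preimage {y}ᶜ)
  have hW : NullMeasurableSet W μ := by
    have : W = N ∩ ⋂ n : ℤ, ⋂ _ : n ≠ 0, (((e ^ n) ⁻¹' N)ᶜ ∪
        {x | x ∈ (fun y => {x | y < p ((e ^ n) x)}) (p x)}) := by
      ext x
      simp [W, imp_iff_not_or]
    rw [this]
    refine hN.inter (NullMeasurableSet.iInter fun n => NullMeasurableSet.iInter fun _ => ?_)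
    refine (hN.preimage (he n)).compl.union ?_
    refine hp.nullMeasurable μ (fun y => {x | y < p ((e ^ n) x)}) fun y => ?_
    exact (he n).measurable (hp.preimage (Ioi y))
  refine ⟨W, hW, ?_, ?_⟩
  · intro n hn x hx hx'
    have h1 := hx.2 n hn hx'.1
    have h2 := hx'.2 (-n) (by simpa using hn)
    have h3 : (e ^ (-n)) ((e ^ n) x) = x := by
      rw [← Equiv.Perm.mul_apply, ← zpow_add]; simp
    rw [h3] at h2
    exact lt_asymm h1 (h2 hx.1)
  · intro x hx
    let S : Set X := {y | ∃ n : ℤ, (e ^ n) x ∈ N ∧ p ((e ^ n) x) = y}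
    have hS : S.Nonempty := ⟨p x, 0, by simpa using (show x ∈ N from hx), by simp⟩
    obtain ⟨n, hnN, hn⟩ := WellFounded.min_mem (wellFounded_lt (α := X)) S hS
    have hmin : ∀ m : ℤ, (e ^ m) x ∈ N → p ((e ^ n) x) ≤ p ((e ^ m) x) := by
      intro m hm
      rw [hn]
      exact not_lt.1 (WellFounded.not_lt_min (wellFounded_lt (α := X)) S ⟨m, hm, rfl⟩)
    refine ⟨n, hnN, ?_⟩
    intro k hk hkN
    have hadd : (e ^ k) ((e ^ n) x) = (e ^ (k + n)) x := by
      rw [← Equiv.Perm.mul_apply, ← zpow_add]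
    rw [hadd] at hkN ⊢
    refine lt_of_le_of_ne (hmin _ hkN) ?_
    intro hcon
    rcases lt_or_gt_of_ne hk with h | h
    · have := hkN (-k) (by omega)
      rw [← Equiv.Perm.mul_apply, ← zpow_add] at this
      simp only [neg_add_cancel_left] at this
      exact this hcon
    · have := hnN k h
      rw [hadd] at this
      exact this hcon.symm

theorem zimg_eq_zpow {X : Type*} (f : X → X) (hf : Function.Bijective f) (n : ℤ) (B : Set X) :
    zimg f n B = (⇑((Equiv.ofBijective f hf : Equiv.Perm X) ^ n)) '' B := by
  set e : Equiv.Perm X := Equiv.ofBijective f hf with he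
  have hit : ∀ m : ℕ, f^[m] = ⇑(e ^ m) := by
    intro m
    rw [← Equiv.Perm.iterate_eq_pow]
    rfl
  unfold zimg
  split_ifs with h
  · obtain ⟨m, rfl⟩ := Int.eq_ofNat_of_zero_le h
    simp [hit]
  · obtain ⟨m, hm⟩ := Int.eq_ofNat_of_zero_le (show 0 ≤ -n by omega)
    have : n = -(m : ℤ) := by omega
    subst this
    simp only [neg_neg, Int.toNat_natCast, hit, zpow_neg, zpow_natCast]
    ext x
    simp only [mem_preimage, mem_image]
    constructor
    · intro hx
      exact ⟨_, hx, by simp⟩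
    · rintro ⟨y, hy, rfl⟩
      simpa using hy

theorem wandering_sum {X : Type*} [MeasurableSpace X] (μ : Measure X) [IsFiniteMeasure μ]
    (e : Equiv.Perm X) (he : ∀ n : ℤ, Measurable (⇑(e ^ n)))
    (T : Set X) (hT : MeasurableSet T) (hw : ∀ n : ℤ, n ≠ 0 → ∀ x ∈ T, (e ^ n) x ∉ T) :
    ∑' n : ℤ, μ ((⇑(e ^ n)) '' T) ≤ μ univ := by
  apply tsum_measure_le_measure_univ
  · intro n
    have : (⇑(e ^ n)) '' T = (⇑(e ^ (-n))) ⁻¹' T := by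
      rw [zpow_neg]
      exact Equiv.image_eq_preimage_symm _ _
    rw [this]
    exact (he (-n) hT).nullMeasurableSet
  · intro m n hmn
    apply Disjoint.aedisjoint
    rw [Set.disjoint_left]
    rintro _ ⟨x, hx, rfl⟩ ⟨y, hy, hxy⟩
    apply hw (-m + n) (by omega) y hy
    rw [zpow_add, Equiv.Perm.mul_apply, hxy, ← Equiv.Perm.mul_apply, ← zpow_add]
    simpa using hx

/-- If `X` is a metric space with a finite Borel measure `μ`, `(X, B, μ, f)` is
a measurable system, and the set of recurrent points of `f` has `μ`-measure zero, then `f`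
satisfies Condition (SC). -/
theorem stmt_2 {X : Type*} [MetricSpace X] [MeasurableSpace X] [BorelSpace X]
    (μ : Measure X) (f : X → X) (c : ℝ≥0∞) (hsys : MeasSystem μ f c)
    (hfin : μ Set.univ ≠ ⊤) (hrec : μ {x : X | Recurrent f x} = 0) :
    SCcond μ f := by
  obtain ⟨-, -, hbij, hmeas, himg, hns, -, -, -⟩ := hsys
  have hfinm : IsFiniteMeasure μ := ⟨lt_top_iff_ne_top.2 hfin⟩
  have hz := zimg_eq_zpow f hbij
  set e : Equiv.Perm X := Equiv.ofBijective f hbij with he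
  have hef : ∀ x, e x = f x := fun x => rfl
  have hq1 : Measure.QuasiMeasurePreserving (⇑e) μ μ := by
    refine ⟨hmeas, Measure.AbsolutelyContinuous.mk fun s hs h0 => ?_⟩
    change Measure.map f μ s = 0
    rw [Measure.map_apply hmeas hs]
    exact (hns s hs).2 h0
  have hpre : ∀ s, (⇑e⁻¹) ⁻¹' s = f '' s := fun s => (Equiv.image_eq_preimage_symm e s).symm
  have hmeas' : Measurable (⇑e⁻¹) := fun s hs => by rw [hpre]; exact himg s hs
  have hq2 : Measure.QuasiMeasurePreserving (⇑e⁻¹) μ μ := by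
    refine ⟨hmeas', Measure.AbsolutelyContinuous.mk fun s hs h0 => ?_⟩
    rw [Measure.map_apply hmeas' hs, hpre]
    refine (hns _ (himg s hs)).1 ?_
    rw [preimage_image_eq _ hbij.1]
    exact h0
  have hq : ∀ n : ℤ, Measure.QuasiMeasurePreserving (⇑(e ^ n)) μ μ := by
    intro n
    obtain ⟨m, rfl | rfl⟩ := n.eq_nat_or_neg
    · rw [zpow_natCast, ← Equiv.Perm.iterate_eq_pow]
      exact hq1.iterate m
    · rw [zpow_neg, zpow_natCast, ← inv_pow, ← Equiv.Perm.iterate_eq_pow]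
      exact hq2.iterate m
  obtain ⟨_, _⟩ := exists_wellOrder X
  choose p hpN hpd using fun k : ℕ => exists_niceIdx (X := X) (1 / ((k : ℝ) + 1)) (by positivity)
  choose W hWm hWw hWc using fun k => exists_wandering_aux μ e hq (p k) (hpN k)
  have hcov : ∀ x, ¬ Recurrent f x → ∃ (k : ℕ) (n : ℤ), (e ^ n) x ∈ W k := by
    intro x hx
    unfold Recurrent at hx
    push Not at hx
    obtain ⟨U, hU, hxU, hn⟩ := hx
    obtain ⟨r, hr, hball⟩ := Metric.isOpen_iff.1 hU x hxU
    obtain ⟨k, hk⟩ := exists_nat_one_div_lt (half_pos hr)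
    refine ⟨k, hWc k x ?_⟩
    intro n hn0 hpe
    obtain ⟨m, rfl⟩ := Int.eq_ofNat_of_zero_le hn0.le
    apply hn m (by omega)
    apply hball
    rw [zpow_natCast, ← Equiv.Perm.iterate_eq_pow] at hpe
    change p k (f^[m] x) = p k x at hpe
    rw [Metric.mem_ball]
    have h1 := hpd k (f^[m] x)
    have h2 := hpd k x
    rw [hpe] at h1
    have h3 := dist_triangle_right (f^[m] x) x (p k x)
    linarith
  obtain ⟨φ, hφ⟩ := exists_surjective_nat (ℕ × ℤ)
  have hTm : ∀ i : ℕ, NullMeasurableSet ((⇑(e ^ (φ i).2)) ⁻¹' (W (φ i).1)) μ :=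
    fun i => (hWm _).preimage (hq _)
  choose T hTsub hTmeas hTae using fun i => (hTm i).exists_measurable_subset_ae_eq
  have hTw : ∀ i, ∀ n : ℤ, n ≠ 0 → ∀ x ∈ T i, (e ^ n) x ∉ T i := by
    intro i n hn x hx hx'
    have h1 := hTsub i hx
    have h2 := hTsub i hx'
    simp only [mem_preimage] at h1 h2
    apply hWw _ n hn _ h1
    rw [← Equiv.Perm.mul_apply, ← zpow_add, add_comm, zpow_add, Equiv.Perm.mul_apply]
    exact h2
  have hfull : ∀ᵐ x ∂μ, ∃ i, x ∈ T i := by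
    have h1 : ∀ᵐ x ∂μ, ¬ Recurrent f x := by
      rw [ae_iff]; simpa using hrec
    have h2 : ∀ᵐ x ∂μ, ∀ i, (x ∈ T i ↔ x ∈ (⇑(e ^ (φ i).2)) ⁻¹' (W (φ i).1)) := by
      rw [ae_all_iff]
      exact fun i => (hTae i).mem_iff
    filter_upwards [h1, h2] with x hx1 hx2
    obtain ⟨k, n, hkn⟩ := hcov x hx1
    obtain ⟨i, hi⟩ := hφ (k, n)
    refine ⟨i, (hx2 i).2 ?_⟩
    rw [hi]
    exact hkn
  intro ε hε B hB _
  let A : ℕ → Set X := fun N => B \ ⋃ i ∈ Finset.range N, T i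
  have hUm : ∀ N : ℕ, MeasurableSet (⋃ i ∈ Finset.range N, T i) :=
    fun N => Finset.measurableSet_biUnion _ fun i _ => hTmeas i
  have hlim : Tendsto (fun N => μ (A N)) atTop (nhds (μ (⋂ N, A N))) := by
    apply tendsto_measure_iInter_atTop
    · exact fun N => (hB.diff (hUm N)).nullMeasurableSet
    · intro a b hab
      apply diff_subset_diff_right
      exact biUnion_subset_biUnion_left (Finset.range_mono hab)
    · exact ⟨0, measure_ne_top _ _⟩
  have h0 : μ (⋂ N, A N) = 0 := by
    refine measure_mono_null ?_ (ae_iff.1 hfull)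
    intro x hx
    rintro ⟨i, hi⟩
    have := (mem_iInter.1 hx (i + 1)).2
    apply this
    simp only [mem_iUnion]
    exact ⟨i, by simp, hi⟩
  rw [h0] at hlim
  obtain ⟨N, hN⟩ := (hlim.eventually (gt_mem_nhds hε)).exists
  refine ⟨B ∩ ⋃ i ∈ Finset.range N, T i, inter_subset_left, hB.inter (hUm N), ?_, ?_⟩
  · rw [diff_self_inter]
    exact hN
  · refine ne_top_of_le_ne_top (b := ∑ i ∈ Finset.range N, μ univ) (by simp [ENNReal.mul_eq_top]) ?_
    calc ∑' n : ℤ, μ (zimg f n (B ∩ ⋃ i ∈ Finset.range N, T i))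
        ≤ ∑' n : ℤ, ∑ i ∈ Finset.range N, μ ((⇑(e ^ n)) '' T i) := by
          refine ENNReal.tsum_le_tsum fun n => ?_
          rw [hz]
          refine le_trans (measure_mono ?_) (measure_biUnion_finset_le _ _)
          refine (image_mono inter_subset_right).trans ?_
          rw [image_iUnion₂]
      _ = ∑ i ∈ Finset.range N, ∑' n : ℤ, μ ((⇑(e ^ n)) '' T i) :=
          Summable.tsum_finsetSum fun i _ => ENNReal.summable
      _ ≤ ∑ i ∈ Finset.range N, μ univ :=
          Finset.sum_le_sum fun i _ =>
            wandering_sum μ e (fun n => (hq n).measurable) (T i) (hTmeas i) (hTw i)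
end

section
/- Let (X, B, μ, f) be a measurable system and p ≥ 1, and suppose the composition operator T_f : L^p(X) → L^p(X), T_f(φ) = φ∘f, is frequently hypercyclic. Then for every wandering set W with 0 < μ(W) < ∞, we have ∑_{n∈ℤ} ‖ dμ/d(μ∘fⁿ) |_W ‖_∞^{-1} < ∞. -/
open MeasureTheory Set Filter
open scoped ENNReal NNReal

open Classical in
/-- Number of `n ∈ [1,N]` with `n ∈ E` and `n + k ∈ E`. -/
noncomputable def cntS (E : Set ℤ) (k : ℤ) (N : ℕ) : ℕ :=
  ((Finset.Icc (1:ℤ) N).filter (fun n => n ∈ E ∧ n + k ∈ E)).card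

open Classical in
lemma card_shift_le (E : Set ℤ) (t s : ℤ) (N : ℕ) :
    ((Finset.Icc (1:ℤ) N).filter (fun n => n + t ∈ E ∧ n + s ∈ E)).card
      ≤ cntS E (s - t) N + t.natAbs := by
  have h1 : ((Finset.Icc (1:ℤ) N).filter (fun n => n + t ∈ E ∧ n + s ∈ E)).image (fun n => n + t)
      ⊆ ((Finset.Icc (1:ℤ) N).filter (fun n => n ∈ E ∧ n + (s - t) ∈ E)) ∪
        (Finset.Icc (1 + t) 0 ∪ Finset.Icc (N + 1 : ℤ) (N + t)) := by
    intro m hm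
    simp only [Finset.mem_image, Finset.mem_filter, Finset.mem_Icc, Finset.mem_union] at hm ⊢
    obtain ⟨n, ⟨⟨h1, h2⟩, h3, h4⟩, rfl⟩ := hm
    by_cases h : 1 ≤ n + t ∧ n + t ≤ N
    · left; refine ⟨h, h3, ?_⟩
      have : n + t + (s - t) = n + s := by ring
      rwa [this]
    · right; omega
  have h2 := Finset.card_le_card h1
  rw [Finset.card_image_of_injective _ (add_left_injective t)] at h2
  refine h2.trans ((Finset.card_union_le _ _).trans ?_)
  unfold cntS
  gcongr
  refine (Finset.card_union_le _ _).trans ?_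
  simp only [Int.card_Icc]
  omega

open Classical in
lemma card_shift_ge (E : Set ℤ) (t : ℤ) (N : ℕ) :
    cntS E 0 N ≤ ((Finset.Icc (1:ℤ) N).filter (fun n => n + t ∈ E)).card + t.natAbs := by
  have h1 : ((Finset.Icc (1:ℤ) N).filter (fun n => n ∈ E ∧ n + 0 ∈ E))
      ⊆ (((Finset.Icc (1:ℤ) N).filter (fun n => n + t ∈ E)).image (fun n => n + t)) ∪
        (Finset.Icc 1 t ∪ Finset.Icc (N + t + 1 : ℤ) N) := by
    intro m hm
    simp only [Finset.mem_image, Finset.mem_filter, Finset.mem_Icc, Finset.mem_union] at hm ⊢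
    by_cases h : 1 ≤ m - t ∧ m - t ≤ N
    · left; exact ⟨m - t, ⟨h, by simpa using hm.2.1⟩, by ring⟩
    · right; omega
  have h2 := Finset.card_le_card h1
  unfold cntS
  refine h2.trans ((Finset.card_union_le _ _).trans ?_)
  rw [Finset.card_image_of_injective _ (add_left_injective t)]
  gcongr
  refine (Finset.card_union_le _ _).trans ?_
  simp only [Int.card_Icc]
  omega

open Classical in
/-- Bonferroni-type inequality. -/
lemma bonf (E : Set ℤ) (T : Finset ℤ) (N : ℕ) :
    (∑ t ∈ T, ((Finset.Icc (1:ℤ) N).filter (fun n => n + t ∈ E)).card) ≤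
      N + ∑ q ∈ T.offDiag,
        ((Finset.Icc (1:ℤ) N).filter (fun n => n + q.1 ∈ E ∧ n + q.2 ∈ E)).card := by
  simp only [Finset.card_filter]
  rw [Finset.sum_comm, Finset.sum_comm (s := T.offDiag)]
  have : N = ∑ n ∈ Finset.Icc (1:ℤ) N, 1 := by simp
  conv_rhs => rw [this]
  simp only [Nat.cast_sum, Nat.cast_one]
  have h0 : (∑ n ∈ Finset.Icc (1:ℤ) N, (1:ℤ)) = N := by simp
  rw [h0, ← Finset.sum_add_distrib]
  refine Finset.sum_le_sum fun n _ => ?_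
  rw [← Finset.card_filter, ← Finset.card_filter]
  have h3 : T.offDiag.filter (fun q => n + q.1 ∈ E ∧ n + q.2 ∈ E)
      = (T.filter (fun t => n + t ∈ E)).offDiag := by
    ext q; simp only [Finset.mem_filter, Finset.mem_offDiag]; tauto
  rw [h3, Finset.offDiag_card]
  set g := (T.filter (fun t => n + t ∈ E)).card
  rcases g with _ | g
  · simp
  · have : (g+1)*(g+1) - (g+1) = g * g + g := by
      have : (g+1)*(g+1) = g * g + g + (g + 1) := by ring
      omega
    rw [this]; nlinarith

lemma comb (E : Set ℤ) (d : ℝ) (hd : 0 < d)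
    (hE : ∀ᶠ N : ℕ in atTop, d * N ≤ cntS E 0 N) :
    ∃ (K : Set ℤ) (δ : ℝ) (R : ℕ), 0 < δ ∧ (∀ j : ℤ, ∃ i ∈ Finset.range (R+1), j + (i:ℤ) ∈ K) ∧
      ∀ G : Finset ℤ, (∀ k ∈ G, k ∈ K) → ∃ N : ℕ, 0 < N ∧ ∀ k ∈ G, δ * N ≤ cntS E k N := by
  classical
  obtain ⟨r0, hr0⟩ := exists_nat_gt (3 / d)
  set r := r0 + 1 with hrdef
  have hr : 3 ≤ r * d := by
    have : 3 < r0 * d := by rwa [div_lt_iff₀ hd] at hr0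
    push_cast [hrdef]; nlinarith
  have hrpos : (0:ℝ) < r := by positivity
  set δ : ℝ := min d (1 / (r:ℝ)^2) with hδ
  have hδ0 : 0 < δ := lt_min hd (by positivity)
  set U : Ultrafilter ℕ := hyperfilter ℕ
  have hU : (U : Filter ℕ) ≤ atTop := Nat.hyperfilter_le_atTop
  set K : Set ℤ := {k | ∀ᶠ N in (U : Filter ℕ), δ * N ≤ cntS E k N} with hK
  have hK0 : (0:ℤ) ∈ K := by
    refine (hE.filter_mono hU).mono fun N hN => le_trans ?_ hN
    gcongr; exact min_le_left _ _
  have hnK : ∀ k, k ∉ K → ∀ᶠ N in (U : Filter ℕ), (cntS E k N : ℝ) < δ * N := by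
    intro k hk
    have := Ultrafilter.eventually_not.2 hk
    exact this.mono fun N hN => not_le.1 hN
  -- finite families with bad differences
  have hT : ∀ T : Finset ℤ, T.card = r → 
      ¬ (∀ t ∈ T, ∀ s ∈ T, t ≠ s → (t - s ∉ K ∨ s - t ∉ K)) := by
    intro T hTr hbad
    set M : ℕ := ∑ t ∈ T, t.natAbs with hM
    have hMt : ∀ t ∈ T, t.natAbs ≤ M := fun t ht =>
      Finset.single_le_sum (f := fun t : ℤ => t.natAbs) (fun _ _ => Nat.zero_le _) ht
    have hpair : ∀ᶠ N : ℕ in (U : Filter ℕ), ∀ q ∈ T.offDiag,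
        ((((Finset.Icc (1:ℤ) N).filter (fun n => n + q.1 ∈ E ∧ n + q.2 ∈ E)).card : ℕ) : ℝ)
          ≤ δ * N + M := by
      rw [Filter.eventually_all_finset]
      rintro ⟨t, s⟩ hq
      rw [Finset.mem_offDiag] at hq
      obtain ⟨ht, hs, hne⟩ := hq
      simp only at ht hs hne ⊢
      rcases hbad t ht s hs hne with h | h
      · filter_upwards [hnK _ h] with N hN
        have h1 := card_shift_le E s t N
        have h2 := hMt s hs
        have h3 : ((Finset.Icc (1:ℤ) N).filter (fun n => n + t ∈ E ∧ n + s ∈ E)).card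
          ≤ cntS E (t - s) N + M := by
          simp only [and_comm (a := _ + s ∈ E)] at h1; omega
        have h4 : ((((Finset.Icc (1:ℤ) N).filter
          (fun n => n + t ∈ E ∧ n + s ∈ E)).card : ℕ) : ℝ) ≤ cntS E (t - s) N + M := by
          exact_mod_cast h3
        linarith
      · filter_upwards [hnK _ h] with N hN
        have h1 := card_shift_le E t s N
        have h2 := hMt t ht
        have h3 : ((Finset.Icc (1:ℤ) N).filter (fun n => n + t ∈ E ∧ n + s ∈ E)).card
          ≤ cntS E (s - t) N + M := by omega
        have h4 : ((((Finset.Icc (1:ℤ) N).filter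
          (fun n => n + t ∈ E ∧ n + s ∈ E)).card : ℕ) : ℝ) ≤ cntS E (s - t) N + M := by
          exact_mod_cast h3
        linarith
    have hbig : ∀ᶠ N in (U : Filter ℕ), (r + r^2) * M + 1 ≤ N := 
      hU (eventually_ge_atTop _)
    obtain ⟨N, h1, h2, h3⟩ := (hpair.and (hbig.and (hE.filter_mono hU))).exists
    have hb := bonf E T N
    have hb' : (∑ t ∈ T, ((((Finset.Icc (1:ℤ) N).filter (fun n => n + t ∈ E)).card : ℕ) : ℝ)) ≤
      N + ∑ q ∈ T.offDiag,
        ((((Finset.Icc (1:ℤ) N).filter (fun n => n + q.1 ∈ E ∧ n + q.2 ∈ E)).card : ℕ) : ℝ) := by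
      exact_mod_cast hb
    have hlow : (r:ℝ) * (d * N - M) ≤
        ∑ t ∈ T, ((((Finset.Icc (1:ℤ) N).filter (fun n => n + t ∈ E)).card : ℕ) : ℝ) := by
      have := Finset.card_nsmul_le_sum T
        (fun t => ((((Finset.Icc (1:ℤ) N).filter (fun n => n + t ∈ E)).card : ℕ) : ℝ))
        (d * N - M) (fun t ht => by
          have h4 := card_shift_ge E t N
          have h5 := hMt t ht
          have h6 : (cntS E 0 N : ℝ) ≤
            ((((Finset.Icc (1:ℤ) N).filter (fun n => n + t ∈ E)).card : ℕ) : ℝ) + M := by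
            exact_mod_cast h4.trans (by omega)
          linarith)
      rwa [hTr, nsmul_eq_mul] at this
    have hup : ∑ q ∈ T.offDiag,
        ((((Finset.Icc (1:ℤ) N).filter (fun n => n + q.1 ∈ E ∧ n + q.2 ∈ E)).card : ℕ) : ℝ)
        ≤ (r:ℝ)^2 * (δ * N + M) := by
      have := Finset.sum_le_card_nsmul _ _ _ h1
      rw [nsmul_eq_mul] at this
      refine this.trans ?_
      have hc : (T.offDiag.card : ℝ) ≤ (r:ℝ)^2 := by
        have : T.offDiag.card ≤ r^2 := by
          rw [Finset.offDiag_card, hTr, sq]; omega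
        exact_mod_cast this
      gcongr
    have hδr : (r:ℝ)^2 * δ ≤ 1 := by
      have : δ ≤ 1 / (r:ℝ)^2 := min_le_right _ _
      rwa [le_div_iff₀ (by positivity), mul_comm] at this
    have h2' : ((r:ℝ) + r^2) * M + 1 ≤ N := by exact_mod_cast h2
    have hN0 : (0:ℝ) ≤ N := Nat.cast_nonneg _
    have e1 : 3 * (N:ℝ) ≤ r * d * N := by gcongr
    have e2 : (r:ℝ)^2 * δ * N ≤ 1 * N := by gcongr
    nlinarith
  -- syndeticity
  have hsynd : ∃ R : ℕ, ∀ j : ℤ, ∃ i ∈ Finset.range (R+1), j + (i:ℤ) ∈ K := by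
    by_contra hcon
    push Not at hcon
    have : ∀ m : ℕ, ∃ T : Finset ℤ, T.card = m ∧
        (∀ t ∈ T, ∀ s ∈ T, t ≠ s → (t - s ∉ K ∨ s - t ∉ K)) := by
      intro m
      induction m with
      | zero => exact ⟨∅, by simp⟩
      | succ m ih =>
        obtain ⟨T, hTc, hTb⟩ := ih
        set M : ℕ := ∑ t ∈ T, t.natAbs with hM
        have hMt : ∀ t ∈ T, t.natAbs ≤ M := fun t ht =>
          Finset.single_le_sum (f := fun t : ℤ => t.natAbs) (fun _ _ => Nat.zero_le _) ht
        obtain ⟨j, hj⟩ := hcon (2 * M)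
        have hs : ∀ t ∈ T, j + M - t ∉ K := by
          intro t ht
          have h1 := hMt t ht
          have h2 := hj ((M:ℤ) - t).toNat (by rw [Finset.mem_range]; omega)
          have h3 : j + (((M:ℤ) - t).toNat : ℤ) = j + M - t := by omega
          rwa [h3] at h2
        have hsT : j + M ∉ T := fun h => hs _ h (by simpa using hK0)
        refine ⟨insert (j + M) T, by rw [Finset.card_insert_of_notMem hsT, hTc], ?_⟩
        intro t ht s hs' hne
        rw [Finset.mem_insert] at ht hs'
        rcases ht with rfl | ht <;> rcases hs' with rfl | hs'
        · exact absurd rfl hne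
        · left; exact hs s hs'
        · right; exact hs t ht
        · exact hTb t ht s hs' hne
    obtain ⟨T, h1, h2⟩ := this r
    exact hT T h1 h2
  obtain ⟨R, hR⟩ := hsynd
  refine ⟨K, δ, R, hδ0, hR, fun G hG => ?_⟩
  have : ∀ᶠ N in (U : Filter ℕ), ∀ k ∈ G, δ * N ≤ cntS E k N := by
    rw [Filter.eventually_all_finset]; exact hG
  obtain ⟨N, h1, h2⟩ := (this.and (hU (eventually_gt_atTop 0))).exists
  exact ⟨N, h2, h1⟩

lemma sum_fin (E : Set ℤ) (d : ℝ) (hd : 0 < d)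
    (hE : ∀ᶠ N : ℕ in atTop, d * N ≤ cntS E 0 N) (D : ℤ → ℝ≥0∞) (c C : ℝ≥0∞) (hc : c ≠ ⊤)
    (hC : C ≠ ⊤) (hD : ∀ j, D j ≤ c * D (j+1))
    (hs : ∀ n ∈ E, ∀ G : Finset ℤ, (∀ k ∈ G, n + k ∈ E) → ∑ k ∈ G, D k ≤ C) :
    ∑' j, D j ≠ ⊤ := by
  classical
  obtain ⟨K, δ, R, hδ, hK, hG⟩ := comb E d hd hE
  have hDi : ∀ (i : ℕ) j, D j ≤ c ^ i * D (j + i) := by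
    intro i
    induction i with
    | zero => simp
    | succ i ih =>
      intro j
      refine (ih j).trans ?_
      rw [pow_succ, mul_assoc]
      gcongr
      refine (hD _).trans (le_of_eq ?_)
      push_cast; ring_nf
  have hfin : ∀ G : Finset ℤ, (∀ k ∈ G, k ∈ K) → ∑ k ∈ G, D k ≤ C / ENNReal.ofReal δ := by
    intro G hGK
    obtain ⟨N, hN, h⟩ := hG G hGK
    have h1 : ∑ k ∈ G, D k * (cntS E k N : ℝ≥0∞) ≤ C * N := by
      unfold cntS
      simp only [Finset.card_filter, Nat.cast_sum, Finset.mul_sum]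
      rw [Finset.sum_comm]
      have : ∀ n ∈ Finset.Icc (1:ℤ) N, 
        ∑ k ∈ G, D k * (((if n ∈ E ∧ n + k ∈ E then 1 else 0 : ℕ)) : ℝ≥0∞) ≤ C := by
        intro n _
        by_cases hn : n ∈ E
        · refine le_trans (le_of_eq ?_) (hs n hn (G.filter (fun k => n + k ∈ E)) (by simp))
          rw [Finset.sum_filter]
          refine Finset.sum_congr rfl fun k _ => ?_
          by_cases hk : n + k ∈ E <;> simp [hn, hk]
        · simp [hn]
      refine (Finset.sum_le_card_nsmul _ _ _ this).trans (le_of_eq ?_)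
      simp [mul_comm]
    have h2 : (∑ k ∈ G, D k) * (ENNReal.ofReal δ * N) ≤ C * N := by
      refine le_trans ?_ h1
      rw [Finset.sum_mul]
      refine Finset.sum_le_sum fun k hk => ?_
      gcongr
      have := h k hk
      have h3 := ENNReal.ofReal_le_ofReal this
      rwa [ENNReal.ofReal_mul hδ.le, ENNReal.ofReal_natCast, ENNReal.ofReal_natCast] at h3
    rw [← mul_assoc] at h2
    have hN0 : (N : ℝ≥0∞) ≠ 0 := by exact_mod_cast hN.ne'
    have h3 := (ENNReal.mul_le_mul_iff_left hN0 (ENNReal.natCast_ne_top N)).1 h2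
    rw [ENNReal.le_div_iff_mul_le (by simp [hδ]) (by simp)]
    exact h3
  have hKsum : ∑' k, K.indicator D k ≤ C / ENNReal.ofReal δ := by
    rw [ENNReal.tsum_eq_iSup_sum]
    refine iSup_le fun G => ?_
    refine le_trans (le_of_eq ?_) (hfin (G.filter (· ∈ K)) (by simp))
    rw [Finset.sum_filter]
    rfl
  have hj : ∀ j, D j ≤ ∑ i ∈ Finset.range (R+1), c ^ i * K.indicator D (j + (i:ℤ)) := by
    intro j
    obtain ⟨i, hi, hik⟩ := hK j
    refine le_trans ?_ (Finset.single_le_sum (f := fun i : ℕ => c ^ i * K.indicator D (j + (i:ℤ)))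
      (fun _ _ => zero_le) hi)
    simp only [Set.indicator_of_mem hik]
    exact hDi i j
  have hle : ∑' j, D j ≤ ∑ i ∈ Finset.range (R+1), c ^ i * (C / ENNReal.ofReal δ) := by
    refine (ENNReal.tsum_le_tsum hj).trans ?_
    rw [Summable.tsum_finsetSum (fun _ _ => ENNReal.summable)]
    refine Finset.sum_le_sum fun i _ => ?_
    rw [ENNReal.tsum_mul_left]
    gcongr
    refine le_trans (le_of_eq ?_) hKsum
    exact (Equiv.addRight (i:ℤ)).tsum_eq (K.indicator D)
  refine ne_top_of_le_ne_top ?_ hle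
  refine ENNReal.sum_ne_top.2 fun i _ => ENNReal.mul_ne_top (ENNReal.pow_ne_top hc) ?_
  exact ENNReal.div_ne_top hC (by simp [hδ])

lemma zimg_eq {X : Type*} (g : Equiv.Perm X) (n : ℤ) (B : Set X) :
    zimg g n B = ⇑(g ^ (-n)) ⁻¹' B := by
  unfold zimg
  split_ifs with h
  · obtain ⟨m, rfl⟩ := Int.eq_ofNat_of_zero_le h
    rw [zpow_neg, zpow_natCast, Int.toNat_natCast, Equiv.Perm.iterate_eq_pow]
    exact Equiv.image_eq_preimage_symm _ _
  · obtain ⟨m, hm⟩ := Int.eq_ofNat_of_zero_le (a := -n) (by omega)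
    rw [hm, zpow_natCast, Int.toNat_natCast, Equiv.Perm.iterate_eq_pow]

lemma zpow_meas {X : Type*} [MeasurableSpace X] (μ : Measure X) (g : Equiv.Perm X)
    (h1 : Measurable g) (h2 : Measurable ⇑g⁻¹)
    (h3 : ∀ B : Set X, MeasurableSet B → (μ (g ⁻¹' B) = 0 ↔ μ B = 0)) (n : ℤ) :
    Measurable ⇑(g ^ n) ∧ ∀ B : Set X, MeasurableSet B → (μ (⇑(g ^ n) ⁻¹' B) = 0 ↔ μ B = 0) := by
  have h4 : ∀ B : Set X, MeasurableSet B → (μ (⇑g⁻¹ ⁻¹' B) = 0 ↔ μ B = 0) := by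
    intro B hB
    rw [← h3 _ (h2 hB), ← Set.preimage_comp]
    have : (⇑g⁻¹ ∘ ⇑g) = id := by ext x; simp
    rw [this, Set.preimage_id]
  induction n using Int.induction_on with
  | zero => simp [measurable_id]
  | succ i ih =>
    rw [zpow_add_one, Equiv.Perm.coe_mul]
    refine ⟨ih.1.comp h1, fun B hB => ?_⟩
    rw [Set.preimage_comp, h3 _ (ih.1 hB), ih.2 B hB]
  | pred i ih =>
    rw [zpow_sub_one, Equiv.Perm.coe_mul]
    refine ⟨ih.1.comp h2, fun B hB => ?_⟩
    rw [Set.preimage_comp, h4 _ (ih.1 hB), ih.2 B hB]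

/-- The best constant `d` with `d * μ B ≤ ν B` for `B ⊆ W`. -/
noncomputable def bestD {X : Type*} [MeasurableSpace X] (μ ν : Measure X) (W : Set X) : ℝ≥0∞ :=
  ⨅ B : {B : Set X // MeasurableSet B ∧ B ⊆ W ∧ μ B ≠ 0}, ν B / μ B

lemma bestD_mul_le {X : Type*} [MeasurableSpace X] (μ ν : Measure X) (W : Set X) (B : Set X)
    (hB : MeasurableSet B) (hBW : B ⊆ W) : bestD μ ν W * μ B ≤ ν B := by
  by_cases h : μ B = 0
  · simp [h]
  · exact ENNReal.mul_le_of_le_div (iInf_le _ (⟨B, hB, hBW, h⟩ : {B : Set X // _}))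

lemma dSeq_le_bestD {X : Type*} [MeasurableSpace X] (μ ν : Measure X) [SigmaFinite μ]
    [SigmaFinite ν] (h1 : μ ≪ ν) (h2 : ν ≪ μ) (W : Set X) (hW : μ W ≠ ⊤) :
    dSeq μ ν W ≤ bestD μ ν W := by
  refine le_iInf fun ⟨B, hB, hBW, hB0⟩ => ?_
  have hBt : μ B ≠ ⊤ := ne_top_of_le_ne_top hW (measure_mono hBW)
  simp only
  rw [ENNReal.le_div_iff_mul_le (Or.inl hB0) (Or.inl hBt)]
  unfold dSeq
  set S := essSup (μ.rnDeriv ν) (μ.restrict W) with hS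
  have h3 : ∀ᵐ x ∂(ν.restrict B), μ.rnDeriv ν x ≤ S := by
    have h4 : ∀ᵐ x ∂(μ.restrict W), μ.rnDeriv ν x ≤ S := ae_le_essSup
    have h5 : ν.restrict B ≪ μ.restrict W :=
      (h2.restrict B).trans (Measure.absolutelyContinuous_of_le (Measure.restrict_mono hBW le_rfl))
    exact h5.ae_le h4
  have h6 : μ B ≤ S * ν B := by
    rw [← Measure.setLIntegral_rnDeriv h1 B]
    refine (lintegral_mono_ae h3).trans ?_
    simp
  by_cases hS0 : S = 0
  · exact absurd (by simpa [hS0] using h6) hB0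
  by_cases hSt : S = ⊤
  · simp [hSt]
  · rw [ENNReal.inv_mul_le_iff hS0 hSt]; exact h6

lemma bestD_step {X : Type*} [MeasurableSpace X] (μ ν ν' : Measure X) (W : Set X) (c : ℝ≥0∞)
    (hc0 : c ≠ 0) (hct : c ≠ ⊤) (h : ∀ B, MeasurableSet B → ν B ≤ c * ν' B) :
    bestD μ ν W ≤ c * bestD μ ν' W := by
  rw [← ENNReal.inv_mul_le_iff hc0 hct]
  refine le_iInf fun B => ?_
  rw [ENNReal.inv_mul_le_iff hc0 hct, ← mul_div_assoc]
  refine (iInf_le _ B).trans ?_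
  gcongr
  exact h _ B.2.1

open Classical in
lemma pld (A : Set ℕ) (h : PosLowerDensity A) :
    ∃ d : ℝ, 0 < d ∧ ∀ᶠ N : ℕ in atTop, d * N ≤ cntS {z : ℤ | 0 ≤ z ∧ z.toNat ∈ A} 0 N := by
  unfold PosLowerDensity at h
  obtain ⟨d, hd, hd2⟩ := exists_between h
  refine ⟨d, hd, ?_⟩
  have := eventually_lt_of_lt_liminf hd2
    (isBoundedUnder_of ⟨0, fun N => by positivity⟩)
  filter_upwards [this, eventually_gt_atTop 0] with N hN hN0
  have hN0' : (0:ℝ) < N := by exact_mod_cast hN0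
  rw [lt_div_iff₀ hN0'] at hN
  refine hN.le.trans ?_
  norm_cast
  unfold cntS
  rw [← Set.ncard_coe_finset]
  refine Set.ncard_le_ncard_of_injOn (fun n : ℕ => (n : ℤ)) ?_ (by
    intro a _ b _ hab; exact Int.ofNat_injective hab) (Finset.finite_toSet _)
  intro a ha
  simp only [Set.mem_inter_iff, Set.mem_Icc] at ha
  simp [ha.1, ha.2.1, ha.2.2]

lemma T_pow {X : Type*} [MeasurableSpace X] (μ : Measure X) (f : X → X)
    (hf : Measure.QuasiMeasurePreserving f μ μ) (p : ℝ≥0∞) [Fact (1 ≤ p)]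
    (T : Lp ℝ p μ →L[ℝ] Lp ℝ p μ)
    (hT : ∀ φ : Lp ℝ p μ, (T φ : X → ℝ) =ᵐ[μ] fun x => (φ : X → ℝ) (f x))
    (φ : Lp ℝ p μ) (n : ℕ) :
    ((T ^ n) φ : X → ℝ) =ᵐ[μ] fun x => (φ : X → ℝ) (f^[n] x) := by
  induction n with
  | zero => simp
  | succ n ih =>
    rw [pow_succ']
    refine (hT _).trans ?_
    exact hf.ae_eq_comp ih

theorem main6 {X : Type*} [MeasurableSpace X] (μ : Measure X) (g : Equiv.Perm X) (c : ℝ≥0∞)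
    (hsys : MeasSystem μ g c) (p : ℝ≥0∞) [Fact (1 ≤ p)] (hp : p ≠ ⊤)
    (T : Lp ℝ p μ →L[ℝ] Lp ℝ p μ)
    (hT : ∀ φ : Lp ℝ p μ, (T φ : X → ℝ) =ᵐ[μ] fun x => (φ : X → ℝ) (g x))
    (hfh : FreqHC T)
    (ν : ℤ → Measure X) (hν : ∀ (n : ℤ) (B : Set X), MeasurableSet B → ν n B = μ (zimg g n B))
    (W : Set X) (hWm : MeasurableSet W) (hWw : Wandering g W)
    (hW0 : 0 < μ W) (hWfin : μ W ≠ ⊤) :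
    ∑' n : ℤ, dSeq μ (ν n) W ≠ ⊤ := by
  obtain ⟨hσ, -, -, hgm, hgi, hns, hc0, hct, hc⟩ := hsys
  have hgm' : Measurable ⇑g⁻¹ := by
    intro B hB
    have := hgi B hB
    rwa [Equiv.image_eq_preimage_symm] at this
  have hz := zpow_meas μ g hgm hgm' hns
  have hν' : ∀ n B, MeasurableSet B → ν n B = μ (⇑(g ^ (-n)) ⁻¹' B) := by
    intro n B hB; rw [hν n B hB, zimg_eq]
  have hp0 : p ≠ 0 := fun h => by
    have := (Fact.out : 1 ≤ p); simp [h] at this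
  have hq : 0 < p.toReal := ENNReal.toReal_pos hp0 hp
  have hqmp : Measure.QuasiMeasurePreserving g μ μ :=
    ⟨hgm, Measure.AbsolutelyContinuous.mk fun s hs h0 => by
      rw [Measure.map_apply hgm hs]; exact (hns s hs).2 h0⟩
  -- properties of ν
  have hac1 : ∀ n, μ ≪ ν n := fun n => Measure.AbsolutelyContinuous.mk fun s hs h0 => by
    rw [hν' n s hs, (hz _).2 s hs] at h0; exact h0
  have hac2 : ∀ n, ν n ≪ μ := fun n => Measure.AbsolutelyContinuous.mk fun s hs h0 => by
    rw [hν' n s hs, (hz _).2 s hs]; exact h0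
  have hσν : ∀ n, SigmaFinite (ν n) := by
    intro n
    let e : X ≃ᵐ X := 
      { toEquiv := g ^ (-n)
        measurable_toFun := (hz _).1
        measurable_invFun := by
          have := (hz n).1
          have h : (g ^ (-n)).symm = g ^ n := by
            rw [zpow_neg]; rfl
          rwa [h] }
    have : ν n = μ.map e := by
      ext s hs
      rw [Measure.map_apply e.measurable hs, hν' n s hs]; rfl
    rw [this]
    exact e.sigmaFinite_map
  -- reduce
  obtain ⟨φ, hφ⟩ := hfh
  set one : Lp ℝ p μ := indicatorConstLp p hWm hWfin (1:ℝ) with hone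
  set e : ℝ≥0∞ := 2⁻¹ * (μ W / 2) ^ (1 / p.toReal) with he
  have hW2 : μ W / 2 ≠ ⊤ := ENNReal.div_ne_top hWfin (by simp)
  have hW20 : μ W / 2 ≠ 0 := by simp [hW0.ne']
  have het : e ≠ ⊤ := ENNReal.mul_ne_top (by simp) (ENNReal.rpow_ne_top_of_nonneg (by positivity) hW2)
  have he0 : e ≠ 0 := by
    refine mul_ne_zero (by simp) ?_
    exact (ENNReal.rpow_pos (pos_iff_ne_zero.2 hW20) hW2).ne'
  obtain ⟨d, hd, hE⟩ := pld _ (hφ (Metric.eball one e) Metric.isOpen_eball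
    ⟨one, Metric.mem_eball_self (pos_iff_ne_zero.2 he0)⟩)
  set E : Set ℤ := {z : ℤ | 0 ≤ z ∧ z.toNat ∈ {n : ℕ | (T ^ n) φ ∈ Metric.eball one e}} with hEdef
  have hφm : Measurable (φ : X → ℝ) := (Lp.stronglyMeasurable φ).measurable
  -- T^n φ in terms of zpow
  have hTn : ∀ n ∈ E, ((T ^ n.toNat) φ : X → ℝ) =ᵐ[μ] fun x => (φ : X → ℝ) ((g ^ n) x) := by
    intro n hn
    have := T_pow μ g hqmp p T hT φ n.toNat
    obtain ⟨m, rfl⟩ := Int.eq_ofNat_of_zero_le hn.1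
    rw [Int.toNat_natCast, Equiv.Perm.iterate_eq_pow] at this
    rw [Int.toNat_natCast, zpow_natCast]
    exact this
  set B : ℤ → Set X := fun n => {x ∈ W | (2⁻¹:ℝ≥0∞) ≤ ‖(φ : X → ℝ) ((g ^ n) x)‖ₑ} with hB
  have hBm : ∀ n, MeasurableSet (B n) := fun n =>
    hWm.inter (measurableSet_le measurable_const (hφm.comp (hz n).1).enorm)
  have hBW : ∀ n, B n ⊆ W := fun n => Set.sep_subset _ _
  have hBmu : ∀ n ∈ E, μ W / 2 ≤ μ (B n) := by
    intro n hn
    have hdist : eLpNorm (⇑((T ^ n.toNat) φ) - ⇑one) p μ < e := by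
      have := hn.2
      simp only [Set.mem_setOf_eq, Metric.mem_eball, Lp.edist_def] at this
      exact this
    have hch := meas_ge_le_mul_pow_eLpNorm_enorm μ hp0 hp
      ((Lp.aestronglyMeasurable ((T ^ n.toNat) φ)).sub (Lp.aestronglyMeasurable one))
      (ε := 2⁻¹) (by simp) (by simp)
    have hsub : μ (W \ B n) ≤ μ {x | (2⁻¹:ℝ≥0∞) ≤ ‖(⇑((T ^ n.toNat) φ) - ⇑one) x‖ₑ} := by
      refine measure_mono_ae ?_
      filter_upwards [hTn n hn, indicatorConstLp_coeFn (p := p) (hs := hWm) (hμs := hWfin) (c := (1:ℝ))]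
        with x hx1 hx2 hxW
      have hxW' : x ∈ W := hxW.1
      have hx3 : ‖(φ : X → ℝ) ((g ^ n) x)‖ₑ < 2⁻¹ := by
        by_contra hcon
        exact hxW.2 ⟨hxW', not_lt.1 hcon⟩
      change (2⁻¹:ℝ≥0∞) ≤ ‖((T ^ n.toNat) φ : X → ℝ) x - (one : X → ℝ) x‖ₑ
      rw [hx1, hone, hx2, Set.indicator_of_mem hxW']
      generalize (φ : X → ℝ) ((g ^ n) x) = y at hx3
      have h2 : (2⁻¹ : ℝ≥0∞) = ENNReal.ofReal (1/2) := by
        rw [ENNReal.ofReal_div_of_pos (by norm_num)]; simp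
      rw [← ofReal_norm_eq_enorm, h2] at hx3 ⊢
      rw [ENNReal.ofReal_lt_ofReal_iff (by norm_num)] at hx3
      refine ENNReal.ofReal_le_ofReal ?_
      rw [Real.norm_eq_abs] at hx3 ⊢
      have := abs_lt.1 hx3
      rw [le_abs]; right; linarith
    have hle : μ (W \ B n) ≤ μ W / 2 := by
      refine hsub.trans (hch.trans ?_)
      rw [← ENNReal.mul_rpow_of_nonneg _ _ hq.le, inv_inv]
      have h5 : (2:ℝ≥0∞) * eLpNorm (⇑((T ^ n.toNat) φ) - ⇑one) p μ
          ≤ (μ W / 2) ^ (1 / p.toReal) := by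
        refine (mul_le_mul_right hdist.le 2).trans (le_of_eq ?_)
        rw [he, ← mul_assoc, ENNReal.mul_inv_cancel (by simp) (by simp), one_mul]
      refine (ENNReal.rpow_le_rpow h5 hq.le).trans (le_of_eq ?_)
      rw [← ENNReal.rpow_mul, one_div, inv_mul_cancel₀ hq.ne', ENNReal.rpow_one]
    have hadd : μ W ≤ μ (B n) + μ (W \ B n) := by
      rw [measure_add_diff (hBm n).nullMeasurableSet]
      exact measure_mono Set.subset_union_right
    have h7 : μ W / 2 + μ W / 2 ≤ μ (B n) + μ W / 2 := by
      rw [ENNReal.add_halves]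
      exact hadd.trans (by gcongr)
    exact (ENNReal.add_le_add_iff_right hW2).1 h7
  set C0 : ℝ≥0∞ := (2 : ℝ≥0∞) ^ p.toReal * (‖one‖ₑ + e) ^ p.toReal with hC0
  have hC0t : C0 ≠ ⊤ := by
    refine ENNReal.mul_ne_top (ENNReal.rpow_ne_top_of_nonneg hq.le (by simp))
      (ENNReal.rpow_ne_top_of_nonneg hq.le (ENNReal.add_ne_top.2 ⟨?_, het⟩))
    exact enorm_ne_top
  have hlarge : ∀ n ∈ E, μ {x | (2⁻¹:ℝ≥0∞) ≤ ‖(φ : X → ℝ) ((g ^ n) x)‖ₑ} ≤ C0 := by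
    intro n hn
    have hch := meas_ge_le_mul_pow_eLpNorm_enorm μ hp0 hp
      (Lp.aestronglyMeasurable ((T ^ n.toNat) φ))
      (ε := 2⁻¹) (by simp) (by simp)
    have hsub : μ {x | (2⁻¹:ℝ≥0∞) ≤ ‖(φ : X → ℝ) ((g ^ n) x)‖ₑ}
        ≤ μ {x | (2⁻¹:ℝ≥0∞) ≤ ‖((T ^ n.toNat) φ : X → ℝ) x‖ₑ} := by
      refine measure_mono_ae ?_
      filter_upwards [hTn n hn] with x hx1 hx2
      change (2⁻¹:ℝ≥0∞) ≤ ‖((T ^ n.toNat) φ : X → ℝ) x‖ₑ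
      rw [hx1]; exact hx2
    refine hsub.trans (hch.trans ?_)
    rw [inv_inv, hC0]
    gcongr
    rw [← Lp.enorm_def]
    have hdist : edist ((T ^ n.toNat) φ) one < e := hn.2
    calc ‖(T ^ n.toNat) φ‖ₑ = ‖one + ((T ^ n.toNat) φ - one)‖ₑ := by congr 1; abel
      _ ≤ ‖one‖ₑ + ‖(T ^ n.toNat) φ - one‖ₑ := enorm_add_le _ _
      _ ≤ ‖one‖ₑ + e := by
        gcongr
        rw [← edist_eq_enorm_sub]; exact hdist.le
  have key : ∑' n : ℤ, bestD μ (ν n) W ≠ ⊤ := by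
    refine sum_fin E d hd hE _ c (C0 / (μ W / 2)) hct (ENNReal.div_ne_top hC0t hW20) ?_ ?_
    · intro j
      refine bestD_step _ _ _ _ _ hc0.ne' hct fun A hA => ?_
      rw [hν' j A hA, hν' (j+1) A hA]
      have := hc (⇑(g ^ (-(j+1))) ⁻¹' A) ((hz _).1 hA)
      rw [← Set.preimage_comp, ← Equiv.Perm.coe_mul, ← zpow_add_one] at this
      simpa using this
    · intro n hn G hG
      rw [ENNReal.le_div_iff_mul_le (Or.inl hW20) (Or.inl hW2), Finset.sum_mul]
      have hdisj : Set.PairwiseDisjoint (G : Set ℤ) fun k => zimg g k (B (n + k)) := by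
        intro k _ l _ hkl
        refine (hWw hkl).mono ?_ ?_
        · simp only [zimg_eq]; exact Set.preimage_mono (hBW _)
        · simp only [zimg_eq]; exact Set.preimage_mono (hBW _)
      have hmeas : ∀ k ∈ G, MeasurableSet (zimg g k (B (n + k))) := by
        intro k _; rw [zimg_eq]; exact (hz _).1 (hBm _)
      calc ∑ k ∈ G, bestD μ (ν k) W * (μ W / 2)
          ≤ ∑ k ∈ G, μ (zimg g k (B (n + k))) := by
            refine Finset.sum_le_sum fun k hk => ?_
            rw [← hν _ _ (hBm _)]
            refine le_trans ?_ (bestD_mul_le μ (ν k) W (B (n+k)) (hBm _) (hBW _))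
            gcongr
            exact hBmu _ (hG k hk)
        _ = μ (⋃ k ∈ G, zimg g k (B (n + k))) := (measure_biUnion_finset hdisj hmeas).symm
        _ ≤ μ {x | (2⁻¹:ℝ≥0∞) ≤ ‖(φ : X → ℝ) ((g ^ n) x)‖ₑ} := by
            refine measure_mono ?_
            refine Set.iUnion₂_subset fun k _ x hx => ?_
            rw [zimg_eq] at hx
            have h8 := hx.2
            rw [← Equiv.Perm.mul_apply, ← zpow_add, add_neg_cancel_right] at h8
            exact h8
        _ ≤ C0 := hlarge n hn
  refine ne_top_of_le_ne_top key (ENNReal.tsum_le_tsum fun n => ?_)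
  have := hσν n
  exact dSeq_le_bestD μ (ν n) (hac1 n) (hac2 n) W hWfin

/-- If the composition operator `T_f` on `L^p(X)` of a measurable system is
frequently hypercyclic, then for every wandering set `W` of finite positive measure,
`∑_{n∈ℤ} ‖dμ/d(μ∘fⁿ)|_W‖_∞⁻¹ < ∞`. Here `ν n` is the measure `B ↦ μ(fⁿ(B))`. -/
theorem stmt_6 {X : Type*} [MeasurableSpace X] (μ : Measure X) (f : X → X) (c : ℝ≥0∞)
    (hsys : MeasSystem μ f c) (p : ℝ≥0∞) [Fact (1 ≤ p)] (hp : p ≠ ⊤)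
    (T : Lp ℝ p μ →L[ℝ] Lp ℝ p μ)
    (hT : ∀ φ : Lp ℝ p μ, (T φ : X → ℝ) =ᵐ[μ] fun x => (φ : X → ℝ) (f x))
    (hfh : FreqHC T)
    (ν : ℤ → Measure X) (hν : ∀ (n : ℤ) (B : Set X), MeasurableSet B → ν n B = μ (zimg f n B))
    (W : Set X) (hWm : MeasurableSet W) (hWw : Wandering f W)
    (hW0 : 0 < μ W) (hWfin : μ W ≠ ⊤) :
    ∑' n : ℤ, dSeq μ (ν n) W ≠ ⊤ := by
  exact main6 μ (Equiv.ofBijective f hsys.2.2.1) c hsys p hp T hT hfh ν hν W hWm hWw hW0 hWfin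
end

section
/- Let (X, B, μ, f) be a dissipative measurable system with μ purely atomic, and suppose f is ergodic. If the composition operator T_f on L^p(X) (p ≥ 1) is frequently hypercyclic, then μ(X) < ∞. -/
open MeasureTheory Set Filter
open scoped ENNReal NNReal

/-- Cesàro averages. -/
noncomputable def avgZ (g : ℤ → ℝ) (N : ℕ) : ℝ := (∑ i ∈ Finset.range N, g ((i : ℤ) + 1)) / N

lemma avgZ_mem {g : ℤ → ℝ} (hg : ∀ n, g n ∈ Set.Icc (0:ℝ) 1) (N : ℕ) :
    avgZ g N ∈ Set.Icc (0:ℝ) 1 := by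
  unfold avgZ
  have h0 : 0 ≤ ∑ i ∈ Finset.range N, g ((i : ℤ) + 1) := Finset.sum_nonneg fun i _ => (hg _).1
  have h1 : ∑ i ∈ Finset.range N, g ((i : ℤ) + 1) ≤ N := by
    calc _ ≤ ∑ i ∈ Finset.range N, (1:ℝ) := Finset.sum_le_sum fun i _ => (hg _).2
      _ = N := by simp
  exact ⟨by positivity, div_le_one_of_le₀ h1 (by positivity)⟩

lemma avgZ_shift {g : ℤ → ℝ} (hg : ∀ n, g n ∈ Set.Icc (0:ℝ) 1) :
    Tendsto (fun N => avgZ (fun n => g (n + 1)) N - avgZ g N) atTop (nhds 0) := by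
  have key : ∀ N, avgZ (fun n => g (n + 1)) N - avgZ g N = (g ((N:ℤ) + 1) - g 1) / N := by
    intro N
    unfold avgZ
    rw [← sub_div, ← Finset.sum_sub_distrib]
    have := Finset.sum_range_sub (fun i : ℕ => g ((i:ℤ) + 1)) N
    simp only [Nat.cast_add, Nat.cast_one, Nat.cast_zero, zero_add] at this
    rw [this]
  simp only [key]
  refine squeeze_zero_norm (a := fun N : ℕ => 1 / (N:ℝ)) ?_ tendsto_one_div_atTop_nhds_zero_nat
  intro N
  rw [norm_div, Real.norm_natCast]
  gcongr
  rw [Real.norm_eq_abs, abs_le]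
  have h1 := hg ((N:ℤ)+1)
  have h2 := hg 1
  constructor <;> linarith [h1.1, h1.2, h2.1, h2.2]

lemma summable_of_density (A : Set ℕ) (hA : PosLowerDensity A) (a : ℤ → ℝ) (ha : ∀ k, 0 ≤ a k)
    (c : ℝ) (hc : 1 ≤ c) (hac : ∀ k, a k ≤ c * a (k + 1)) (C : ℝ)
    (h : ∀ n ∈ A, ∀ S : Finset ℤ, (∀ d ∈ S, ∃ m ∈ A, (n : ℤ) + d = m) → ∑ d ∈ S, a d ≤ C) :
    Summable a := by
  classical
  set I : ℤ → ℝ := Set.indicator ((fun n : ℕ => (n : ℤ)) '' A) 1 with hI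
  have I01 : ∀ n, I n = 0 ∨ I n = 1 := fun n => by
    by_cases hn : n ∈ ((fun n : ℕ => (n : ℤ)) '' A)
    · right; simp [hI, Set.indicator_of_mem hn]
    · left; simp [hI, Set.indicator_of_notMem hn]
  have Imem : ∀ n, I n ∈ Set.Icc (0:ℝ) 1 := fun n => by
    rcases I01 n with h | h <;> simp [h]
  have Ione : ∀ n, I n = 1 → ∃ m ∈ A, n = m := by
    intro n hn
    by_contra hcon
    have : n ∉ ((fun n : ℕ => (n : ℤ)) '' A) := by
      rintro ⟨m, hm, rfl⟩
      exact hcon ⟨m, hm, rfl⟩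
    simp [hI, Set.indicator_of_notMem this] at hn
  set G : ℤ → ℤ → ℤ → ℝ := fun r s n => I (n + r) * I (n + s) with hG
  have Gmem : ∀ r s n, G r s n ∈ Set.Icc (0:ℝ) 1 := fun r s n => by
    rcases I01 (n + r) with h | h <;> rcases I01 (n + s) with h' | h' <;> simp [hG, h, h']
  set U : Filter ℕ := (hyperfilter ℕ : Filter ℕ) with hU
  have hUle : U ≤ atTop := Nat.hyperfilter_le_atTop
  have hlim : ∀ r s, ∃ L, Tendsto (avgZ (G r s)) U (nhds L) := by
    intro r s
    have := (isCompact_Icc (a := (0:ℝ)) (b := 1)).ultrafilter_le_nhds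
      ((hyperfilter ℕ).map (avgZ (G r s))) (by
        rw [le_principal_iff]
        exact Ultrafilter.mem_map.2 (Filter.univ_mem' fun N : ℕ => avgZ_mem (Gmem r s) N))
    obtain ⟨L, -, hL⟩ := this
    exact ⟨L, hL⟩
  choose e he using hlim
  have e_shift1 : ∀ r s, e (r + 1) (s + 1) = e r s := by
    intro r s
    have h1 := (avgZ_shift (Gmem r s)).mono_left hUle
    have h2 := (he (r+1) (s+1)).sub (he r s)
    have : (fun n => G r s (n + 1)) = G (r+1) (s+1) := by
      funext n; simp only [hG]; congr 2 <;> ring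
    rw [this] at h1
    have := tendsto_nhds_unique h1 h2
    linarith
  have e_shift : ∀ t r s, e (r + t) (s + t) = e r s := by
    intro t
    induction t using Int.induction_on with
    | zero => simp
    | succ i ih => intro r s; rw [← add_assoc, ← add_assoc, e_shift1, ih]
    | pred i ih =>
      intro r s
      rw [← e_shift1, ← ih r s]; congr 1 <;> ring
  have e_symm : ∀ r s, e r s = e s r := by
    intro r s
    have : G r s = G s r := by funext n; simp only [hG]; ring
    exact tendsto_nhds_unique (he r s) (this ▸ he s r)
  -- lower bound on the density
  obtain ⟨δ, hδ, hδe⟩ : ∃ δ > 0, δ ≤ e 0 0 := by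
    unfold PosLowerDensity at hA
    obtain ⟨δ, hδ, hδ'⟩ := exists_between hA
    refine ⟨δ, hδ, ?_⟩
    have hev := eventually_lt_of_lt_liminf hδ' (by
      refine isBoundedUnder_of ⟨0, fun N => ?_⟩
      show (0:ℝ) ≤ _
      positivity)
    refine ge_of_tendsto (he 0 0) ?_
    filter_upwards [hUle hev] with N hN
    refine hN.le.trans ?_
    unfold avgZ
    gcongr
    have hcard : (A ∩ Set.Icc 1 N) =
        ((((Finset.range N).filter (fun i => i + 1 ∈ A)).image (· + 1) : Finset ℕ) : Set ℕ) := by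
      ext n
      simp only [Set.mem_inter_iff, Set.mem_Icc, Finset.coe_image, Finset.coe_filter,
        Finset.mem_range, Set.mem_image, Set.mem_ofPred_eq]
      constructor
      · rintro ⟨h1, h2, h3⟩
        exact ⟨n - 1, ⟨by omega, by rwa [Nat.sub_add_cancel h2]⟩, by omega⟩
      · rintro ⟨i, ⟨h1, h2⟩, rfl⟩
        exact ⟨h2, by omega, by omega⟩
    rw [hcard, Set.ncard_coe_finset, Finset.card_image_of_injective _ (add_left_injective 1),
      Finset.card_filter]
    push_cast
    refine Finset.sum_le_sum fun i _ => ?_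
    split_ifs with hi
    · have : I ((i:ℤ) + 1) = 1 := by
        have : ((i:ℤ) + 1) ∈ ((fun n : ℕ => (n : ℤ)) '' A) := ⟨i+1, hi, by push_cast; rfl⟩
        simp [hI, Set.indicator_of_mem this]
      simp [hG, this]
    · exact (Gmem 0 0 _).1
  obtain ⟨s, hs⟩ := exists_nat_gt (2 / δ)
  have hs0 : (0:ℝ) < s := lt_trans (by positivity) hs
  have hsδ : 2 < s * δ := by rwa [div_lt_iff₀ hδ] at hs
  set η : ℝ := 1 / (2 * s ^ 2) with hη
  have hη0 : 0 < η := by positivity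
  -- syndeticity
  obtain ⟨F, hF⟩ : ∃ F : Finset ℤ, ∀ k, ∃ r ∈ F, η ≤ e r k := by
    by_contra hcon
    push Not at hcon
    have : Std.Symm (fun r k : ℤ => e r k < η) := ⟨fun r k hrk => by rw [e_symm]; exact hrk⟩
    obtain ⟨u, -, hu⟩ := exists_seq_of_forall_finset_exists' (fun _ : ℤ => True)
      (fun r k : ℤ => e r k < η) (fun F _ => by
        obtain ⟨k, hk⟩ := hcon F
        exact ⟨k, trivial, hk⟩)
    have hpt : ∀ N : ℕ, 0 < N → 2 * ∑ i ∈ Finset.range s, avgZ (G (u i) (u i)) N ≤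
        1 + ∑ i ∈ Finset.range s, ∑ j ∈ Finset.range s, avgZ (G (u i) (u j)) N := by
      intro N hN
      have hN' : (0:ℝ) < N := by exact_mod_cast hN
      unfold avgZ
      simp only [← Finset.sum_div]
      rw [mul_div_assoc', div_le_iff₀ hN', add_mul, div_mul_cancel₀ _ hN'.ne', one_mul]
      rw [Finset.sum_comm]
      have : ∑ i ∈ Finset.range s, ∑ j ∈ Finset.range s, ∑ n ∈ Finset.range N,
          G (u i) (u j) ((n:ℤ) + 1) = ∑ n ∈ Finset.range N, ∑ i ∈ Finset.range s,
          ∑ j ∈ Finset.range s, G (u i) (u j) ((n:ℤ) + 1) := by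
        rw [Finset.sum_comm (s := Finset.range N)]
        exact Finset.sum_congr rfl fun i _ => Finset.sum_comm
      rw [this]
      have hNs : (N:ℝ) = ∑ n ∈ Finset.range N, (1:ℝ) := by simp
      rw [hNs, Finset.mul_sum, ← Finset.sum_add_distrib]
      refine Finset.sum_le_sum fun n _ => ?_
      have h1 : ∀ i, G (u i) (u i) ((n:ℤ)+1) = I ((n:ℤ)+1+u i) := fun i => by
        rcases I01 ((n:ℤ)+1+u i) with h | h <;> simp [hG, h]
      simp only [h1]
      simp only [hG]
      rw [← Finset.sum_mul_sum]
      nlinarith [sq_nonneg ((∑ i ∈ Finset.range s, I ((n:ℤ)+1+u i)) - 1)]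
    have hL : 2 * ∑ i ∈ Finset.range s, e (u i) (u i) ≤
        1 + ∑ i ∈ Finset.range s, ∑ j ∈ Finset.range s, e (u i) (u j) := by
      refine le_of_tendsto_of_tendsto
        ((tendsto_finsetSum _ fun i _ => he (u i) (u i)).const_mul 2)
        ((tendsto_finsetSum _ fun i _ => tendsto_finsetSum _ fun j _ => he (u i) (u j)).const_add 1)
        ?_
      filter_upwards [hUle (eventually_gt_atTop 0)] with N hN using hpt N hN
    have hdiag : ∀ i, e (u i) (u i) = e 0 0 := fun i => by simpa using e_shift (u i) 0 0
    have hb : ∑ i ∈ Finset.range s, ∑ j ∈ Finset.range s, e (u i) (u j) ≤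
        ∑ i ∈ Finset.range s, ∑ j ∈ Finset.range s, (η + if i = j then e 0 0 else 0) := by
      refine Finset.sum_le_sum fun i _ => Finset.sum_le_sum fun j _ => ?_
      by_cases hij : i = j
      · subst hij; simp only [hdiag, if_true]; linarith
      · simpa [hij] using (hu hij).le
    have hb2 : ∑ i ∈ Finset.range s, ∑ j ∈ Finset.range s, (η + if i = j then e 0 0 else 0)
        = s * (s * η) + s * e 0 0 := by
      simp only [Finset.sum_add_distrib, Finset.sum_const, Finset.card_range, nsmul_eq_mul]
      congr 1
      rw [Finset.sum_congr rfl (g := fun _ => e 0 0)]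
      · simp
      · intro i hi
        rw [Finset.sum_ite_eq, if_pos hi]
    have hb3 : (s:ℝ) * (s * η) = 1/2 := by rw [hη]; field_simp
    simp only [hdiag, Finset.sum_const, Finset.card_range, nsmul_eq_mul] at hL
    rw [hb2, hb3] at hb
    have : s * δ ≤ s * e 0 0 := by gcongr
    linarith
  -- the summable part
  set b : ℤ → ℝ := fun d => if η ≤ e 0 d then a d else 0 with hb
  have hb0 : ∀ d, 0 ≤ b d := fun d => by simp only [hb]; split_ifs; exacts [ha d, le_rfl]
  have hC0 : 0 ≤ C := by
    by_contra hneg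
    have hAe : A = ∅ := by
      by_contra hne
      obtain ⟨n, hn⟩ := Set.nonempty_iff_ne_empty.2 hne
      have := h n hn ∅ (by simp)
      simp at this
      exact hneg this
    unfold PosLowerDensity at hA
    simp [hAe] at hA
  have hbs : Summable b := by
    refine summable_of_sum_le (c := C / η) hb0 fun S => ?_
    rw [le_div_iff₀ hη0]
    have hfin : ∀ N : ℕ, 0 < N → ∑ d ∈ S, b d * avgZ (G 0 d) N ≤ C := by
      intro N hN
      have hN' : (0:ℝ) < N := by exact_mod_cast hN
      unfold avgZ
      simp only [mul_div_assoc', ← Finset.sum_div]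
      rw [div_le_iff₀ hN']
      simp only [Finset.mul_sum]
      rw [Finset.sum_comm]
      have : C * N = ∑ n ∈ Finset.range N, C := by simp [mul_comm]
      rw [this]
      refine Finset.sum_le_sum fun n _ => ?_
      rcases I01 ((n:ℤ)+1) with h0 | h0
      · simp [hG, h0, hC0]
      · obtain ⟨m, hm, hmn⟩ := Ione _ h0
        calc ∑ d ∈ S, b d * G 0 d ((n:ℤ)+1)
            ≤ ∑ d ∈ S, if I ((n:ℤ)+1+d) = 1 then a d else 0 := by
              refine Finset.sum_le_sum fun d _ => ?_
              have hba : b d ≤ a d := by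
                simp only [hb]; split_ifs; exacts [le_rfl, ha d]
              rcases I01 ((n:ℤ)+1+d) with h1 | h1 <;> simp [hG, h0, h1, hba]
          _ = ∑ d ∈ S.filter (fun d => I ((n:ℤ)+1+d) = 1), a d := by
              rw [Finset.sum_filter]
          _ ≤ C := by
              refine h m hm _ fun d hd => ?_
              rw [Finset.mem_filter] at hd
              obtain ⟨m', hm', hh⟩ := Ione _ hd.2
              exact ⟨m', hm', by rw [← hh, hmn]⟩
    have hlim2 : ∑ d ∈ S, b d * e 0 d ≤ C := by
      refine le_of_tendsto (tendsto_finsetSum _ fun d _ => (he 0 d).const_mul (b d)) ?_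
      filter_upwards [hUle (eventually_gt_atTop 0)] with N hN using hfin N hN
    refine le_trans ?_ hlim2
    rw [Finset.sum_mul]
    refine Finset.sum_le_sum fun d _ => ?_
    simp only [hb]
    split_ifs with hd
    · exact mul_le_mul_of_nonneg_left hd (ha d)
    · simp
  -- conclusion
  obtain ⟨M, hM⟩ : ∃ M : ℤ, ∀ r ∈ F, r ≤ M := by
    obtain ⟨M, hM⟩ := F.bddAbove
    exact ⟨M, fun r hr => hM hr⟩
  obtain ⟨J, hJ⟩ : ∃ J : ℕ, ∀ r ∈ F, M - r ≤ J := by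
    obtain ⟨L, hL⟩ := F.bddBelow
    exact ⟨(M - L).toNat, fun r hr => by have := hL hr; omega⟩
  have hiter : ∀ (j : ℕ) k, a k ≤ c ^ j * a (k + j) := by
    intro j
    induction j with
    | zero => simp
    | succ j ih =>
      intro k
      calc a k ≤ c ^ j * a (k + j) := ih k
        _ ≤ c ^ j * (c * a (k + j + 1)) := by gcongr; exact hac _
        _ = _ := by push_cast; rw [pow_succ, add_assoc, mul_assoc]
  refine Summable.of_nonneg_of_le ha (f := fun k => c ^ J * ∑ j ∈ Finset.range (J+1), b (k + j)) ?_ ?_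
  · intro k
    obtain ⟨r, hr, hrk⟩ := hF (k + M)
    have h1 := hM r hr
    have h2 := hJ r hr
    obtain ⟨j, hj⟩ := Int.eq_ofNat_of_zero_le (sub_nonneg.2 h1)
    have hjJ : j ≤ J := by omega
    have hej : e 0 (k + j) = e r (k + M) := by
      rw [← e_shift r 0 (k+j)]; congr 1 <;> omega
    have hbj : b (k + j) = a (k + j) := by simp only [hb]; rw [hej, if_pos hrk]
    calc a k ≤ c ^ j * a (k + j) := hiter j k
      _ ≤ c ^ J * a (k + j) := by
        have := ha (k + j)
        gcongr
      _ = c ^ J * b (k + j) := by rw [hbj]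
      _ ≤ _ := by
        gcongr
        exact Finset.single_le_sum (f := fun j : ℕ => b (k + j)) (fun i _ => hb0 _)
          (Finset.mem_range.2 (by omega))
  · refine Summable.mul_left _ (summable_sum fun j _ => ?_)
    exact hbs.comp_injective (add_left_injective (j:ℤ))

lemma zimg_eq_s10 {X : Type*} (f : X → X) (hf : Function.Bijective f) (n : ℤ) (B : Set X) :
    zimg f n B = ((Equiv.ofBijective f hf) ^ n : Equiv.Perm X) '' B := by
  have hit : ∀ k : ℕ, (((Equiv.ofBijective f hf) ^ k : Equiv.Perm X) : X → X) = f^[k] := by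
    intro k
    rw [Equiv.Perm.coe_pow]; rfl
  unfold zimg
  split_ifs with h
  · obtain ⟨k, rfl⟩ := Int.eq_ofNat_of_zero_le h
    simp [hit]
  · obtain ⟨k, hk⟩ := Int.eq_ofNat_of_zero_le (show 0 ≤ -n by omega)
    have : n = -(k:ℤ) := by omega
    subst this
    rw [zpow_neg, zpow_natCast]
    simp only [neg_neg, Int.toNat_natCast]
    rw [← hit k]
    ext y
    simp only [Set.mem_preimage, Set.mem_image]
    constructor
    · intro hy; exact ⟨_, hy, by simp⟩
    · rintro ⟨z, hz, rfl⟩; simpa using hz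

lemma sum_atoms_le {X : Type*} [MeasurableSpace X] [MeasurableSingletonClass X]
    (μ : Measure X) (p : ℝ≥0∞) [Fact (1 ≤ p)] (hp : p ≠ ⊤) (ψ : Lp ℝ p μ) (S : Finset X) :
    ∑ y ∈ S, ‖ψ y‖ₑ ^ p.toReal * μ {y} ≤ ‖ψ‖ₑ ^ p.toReal := by
  have hp0 : p ≠ 0 := (lt_of_lt_of_le one_pos (Fact.out : 1 ≤ p)).ne'
  have hpr : 0 < p.toReal := ENNReal.toReal_pos hp0 hp
  rw [Lp.enorm_def, eLpNorm_eq_lintegral_rpow_enorm_toReal hp0 hp, one_div, ENNReal.rpow_inv_rpow hpr.ne']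
  rw [← lintegral_finset]
  exact setLIntegral_le_lintegral _ _

/-- If `(X, B, μ, f)` is a dissipative measurable system with `μ` purely
atomic and `f` ergodic, and the composition operator `T_f` on `L^p(X)` is frequently
hypercyclic, then `μ(X) < ∞`. -/
theorem stmt_10 {X : Type*} [MeasurableSpace X] [MeasurableSingletonClass X]
    (μ : Measure X) (f : X → X) (c : ℝ≥0∞) (hsys : MeasSystem μ f c)
    (hdiss : Dissipative f)
    (hatomic : ∀ B : Set X, MeasurableSet B → 0 < μ B → ∃ x ∈ B, 0 < μ {x})
    (herg : ∀ A : Set X, MeasurableSet A → f ⁻¹' A = A → μ A = 0 ∨ μ (Set.univ \ A) = 0)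
    (p : ℝ≥0∞) [Fact (1 ≤ p)] (hp : p ≠ ⊤)
    (T : Lp ℝ p μ →L[ℝ] Lp ℝ p μ)
    (hT : ∀ φ : Lp ℝ p μ, (T φ : X → ℝ) =ᵐ[μ] fun x => (φ : X → ℝ) (f x))
    (hfh : FreqHC T) :
    μ Set.univ ≠ ⊤ := by
  classical
  obtain ⟨hσ, hpos, hbij, hfm, -, hns, hc0, hct, hcb⟩ := hsys
  obtain ⟨x, -, hx⟩ := hatomic Set.univ MeasurableSet.univ hpos
  have hp0 : p ≠ 0 := (lt_of_lt_of_le one_pos (Fact.out : 1 ≤ p)).ne'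
  have hpr : 0 < p.toReal := ENNReal.toReal_pos hp0 hp
  have hfin : ∀ y, μ {y} ≠ ⊤ := by
    intro y
    obtain ⟨n, hn⟩ := Set.mem_iUnion.1 ((iUnion_spanningSets μ).symm ▸ Set.mem_univ y :
      y ∈ ⋃ n, spanningSets μ n)
    exact (lt_of_le_of_lt (measure_mono (Set.singleton_subset_iff.2 hn))
      (measure_spanningSets_lt_top μ n)).ne
  set E : Equiv.Perm X := Equiv.ofBijective f hbij with hE
  set F : ℤ → X := fun n => (E ^ n) x with hF
  have hF0 : F 0 = x := by simp [hF]
  have hFs : ∀ n, f (F n) = F (n + 1) := by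
    intro n
    simp only [hF]
    rw [add_comm, zpow_add, zpow_one]; rfl
  have hFi : ∀ (k : ℕ) n, f^[k] (F n) = F (k + n) := by
    intro k
    induction k with
    | zero => simp
    | succ k ih =>
      intro n
      rw [Function.iterate_succ_apply, hFs, ih]; congr 1; push_cast; ring
  have hpre : ∀ n, f ⁻¹' {F (n + 1)} = {F n} := by
    intro n
    ext y
    simp only [Set.mem_preimage, Set.mem_singleton_iff, ← hFs]
    exact hbij.1.eq_iff
  have hiff : ∀ n, μ {F n} = 0 ↔ μ {F (n + 1)} = 0 := by
    intro n
    rw [← hpre n]; exact hns _ (measurableSet_singleton _)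
  have hFpos : ∀ n, μ {F n} ≠ 0 := by
    intro n
    induction n using Int.induction_on with
    | zero => rw [hF0]; exact hx.ne'
    | succ i ih => exact fun h => ih ((hiff _).2 h)
    | pred i ih =>
      intro h
      have := (hiff _).1 h
      rw [sub_add_cancel] at this
      exact ih this
  have hFinj : Function.Injective F := by
    obtain ⟨W, -, hW, hgen⟩ := hdiss
    obtain ⟨k, hk⟩ := Set.mem_iUnion.1 (hgen.symm ▸ Set.mem_univ x : x ∈ ⋃ n : ℤ, zimg f n W)
    have hmem : ∀ n, F n ∈ zimg f (n + k) W := by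
      intro n
      rw [zimg_eq_s10 f hbij] at hk ⊢
      obtain ⟨w, hw, hwx⟩ := hk
      refine ⟨w, hw, ?_⟩
      rw [zpow_add, Equiv.Perm.mul_apply, hwx]
    intro m n hmn
    by_contra hne
    have hd := hW (show m + k ≠ n + k from fun h => hne (by omega))
    exact Set.disjoint_left.1 hd (hmem m) (hmn ▸ hmem n)
  -- pointwise formula for the iterates
  have hpt : ∀ {u v : X → ℝ}, u =ᵐ[μ] v → ∀ n, u (F n) = v (F n) := by
    intro u v huv n
    by_contra hne
    refine hFpos n (measure_mono_null ?_ huv)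
    rintro y rfl
    exact hne
  have mul_apply_T : ∀ (k : ℕ) (φ : Lp ℝ p μ), (T ^ k * T) φ = (T ^ k) (T φ) := fun _ _ => rfl
  have hTn : ∀ (k : ℕ) (φ : Lp ℝ p μ) n, ((T ^ k) φ : X → ℝ) (F n) = φ (F (k + n)) := by
    intro k
    induction k with
    | zero => intro φ n; simp
    | succ k ih =>
      intro φ n
      rw [pow_succ, mul_apply_T, ih, hpt (hT φ), hFs]
      congr 2; push_cast; ring
  obtain ⟨φ, hφ⟩ := hfh
  set e : Lp ℝ p μ := indicatorConstLp p (measurableSet_singleton x) (hfin x) (1:ℝ) with he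
  have hex : (e : X → ℝ) x = 1 := by
    have := hpt (indicatorConstLp_coeFn (p := p) (hs := measurableSet_singleton x)
      (hμs := hfin x) (c := (1:ℝ))) 0
    rw [hF0] at this
    rw [he, this]; simp
  have hen : ‖e‖ₑ ^ p.toReal = μ {x} := by
    rw [he, Lp.enorm_def, eLpNorm_congr_ae indicatorConstLp_coeFn,
      eLpNorm_indicator_const (measurableSet_singleton x) hp0 hp]
    simp [ENNReal.rpow_inv_rpow hpr.ne']
  have he0 : 0 < ‖e‖ := by
    rw [norm_pos_iff]
    intro h0
    rw [h0] at hen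
    simp [ENNReal.zero_rpow_of_pos hpr] at hen
    exact hx.ne hen
  set V : Set (Lp ℝ p μ) := Metric.ball ((2:ℝ) • e) ‖e‖ with hV
  have hVx : ∀ ψ ∈ V, 1 ≤ ‖(ψ : X → ℝ) x‖ := by
    intro ψ hψ
    rw [hV, Metric.mem_ball, dist_eq_norm] at hψ
    have h1 := sum_atoms_le μ p hp (ψ - (2:ℝ) • e) {x}
    rw [Finset.sum_singleton] at h1
    have h2 : ‖ψ - (2:ℝ) • e‖ₑ ^ p.toReal < μ {x} := by
      rw [← hen]
      refine ENNReal.rpow_lt_rpow ?_ hpr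
      rw [← ofReal_norm, ← ofReal_norm]
      exact (ENNReal.ofReal_lt_ofReal_iff he0).2 hψ
    have h3 : ((ψ - (2:ℝ) • e : Lp ℝ p μ) : X → ℝ) x = ψ x - 2 := by
      have a1 := hpt (Lp.coeFn_sub ψ ((2:ℝ) • e)) 0
      have a2 := hpt (Lp.coeFn_smul (2:ℝ) e) 0
      rw [hF0] at a1 a2
      rw [a1, Pi.sub_apply, a2, Pi.smul_apply, hex]; simp
    rw [h3] at h1
    by_contra hlt
    push Not at hlt
    have h4 : 1 ≤ ‖(ψ : X → ℝ) x - 2‖ := by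
      rw [Real.norm_eq_abs] at hlt ⊢
      rw [abs_lt] at hlt
      rw [le_abs]; right; linarith
    have h5 : (1:ℝ≥0∞) ≤ ‖(ψ : X → ℝ) x - 2‖ₑ := by
      rw [← ofReal_norm]
      simpa using h4
    have h6 : (1:ℝ≥0∞) ≤ ‖(ψ : X → ℝ) x - 2‖ₑ ^ p.toReal := ENNReal.one_le_rpow h5 hpr
    have h7 : μ {x} ≤ ‖(ψ : X → ℝ) x - 2‖ₑ ^ p.toReal * μ {x} := by
      calc μ {x} = 1 * μ {x} := (one_mul _).symm
        _ ≤ _ := by gcongr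
    exact absurd (h7.trans h1) (not_le.2 h2)
  have hVn : ∀ ψ ∈ V, ‖ψ‖ₑ ≤ ENNReal.ofReal (3 * ‖e‖) := by
    intro ψ hψ
    rw [hV, Metric.mem_ball, dist_eq_norm] at hψ
    rw [← ofReal_norm]
    refine ENNReal.ofReal_le_ofReal ?_
    have h1 : ‖ψ‖ ≤ ‖ψ - (2:ℝ) • e‖ + ‖(2:ℝ) • e‖ := by
      simpa using norm_add_le (ψ - (2:ℝ) • e) ((2:ℝ) • e)
    have h2 : ‖(2:ℝ) • e‖ = 2 * ‖e‖ := by rw [norm_smul]; simp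
    linarith
  set A : Set ℕ := {n : ℕ | (T ^ n) φ ∈ V} with hA
  have hAd : PosLowerDensity A := hφ V Metric.isOpen_ball (Metric.nonempty_ball.2 he0)
  have hA1 : ∀ n ∈ A, (1:ℝ≥0∞) ≤ ‖(φ : X → ℝ) (F n)‖ₑ := by
    intro n hn
    have h1 := hVx _ hn
    have h2 := hTn n φ 0
    rw [hF0, add_zero] at h2
    rw [h2] at h1
    rw [← ofReal_norm]
    simpa using h1
  set R : ℝ≥0∞ := ENNReal.ofReal (3 * ‖e‖) ^ p.toReal with hR
  have hRt : R ≠ ⊤ := ENNReal.rpow_ne_top_of_nonneg hpr.le ENNReal.ofReal_ne_top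
  have hsum : ∀ n ∈ A, ∀ S : Finset ℤ, (∀ d ∈ S, ∃ m ∈ A, (n : ℤ) + d = m) →
      ∑ d ∈ S, μ {F d} ≤ R := by
    intro n hn S hS
    calc ∑ d ∈ S, μ {F d} ≤ ∑ d ∈ S, ‖((T ^ n) φ : X → ℝ) (F d)‖ₑ ^ p.toReal * μ {F d} := by
          refine Finset.sum_le_sum fun d hd => ?_
          obtain ⟨m, hm, hnm⟩ := hS d hd
          rw [hTn, hnm]
          calc μ {F d} = 1 * μ {F d} := (one_mul _).symm
            _ ≤ ‖(φ : X → ℝ) (F m)‖ₑ ^ p.toReal * μ {F d} :=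
              mul_le_mul' (ENNReal.one_le_rpow (hA1 m hm) hpr) le_rfl
      _ = ∑ y ∈ S.image F, ‖((T ^ n) φ : X → ℝ) y‖ₑ ^ p.toReal * μ {y} := by
          rw [Finset.sum_image (fun _ _ _ _ h => hFinj h)]
      _ ≤ ‖(T ^ n) φ‖ₑ ^ p.toReal := sum_atoms_le μ p hp _ _
      _ ≤ R := ENNReal.rpow_le_rpow (hVn _ hn) hpr.le
  have hsummable : Summable (fun d => (μ {F d}).toReal) := by
    refine summable_of_density A hAd _ (fun _ => ENNReal.toReal_nonneg) (max 1 c.toReal)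
      (le_max_left _ _) ?_ R.toReal ?_
    · intro k
      have h1 := hcb {F (k+1)} (measurableSet_singleton _)
      rw [hpre] at h1
      have h2 := ENNReal.toReal_mono (ENNReal.mul_ne_top hct (hfin _)) h1
      rw [ENNReal.toReal_mul] at h2
      refine h2.trans ?_
      gcongr
      exact le_max_right _ _
    · intro n hn S hS
      rw [← ENNReal.toReal_sum (fun d _ => hfin _)]
      exact ENNReal.toReal_mono hRt (hsum n hn S hS)
  have htsum : ∑' d, μ {F d} ≠ ⊤ := by
    have h1 := hsummable.tsum_ofReal_ne_top
    simpa [ENNReal.ofReal_toReal (hfin _)] using h1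
  have hBm : MeasurableSet (Set.range F) := (Set.countable_range F).measurableSet
  have hinv : f ⁻¹' (Set.range F) = Set.range F := by
    ext y
    constructor
    · rintro ⟨n, hn⟩
      refine ⟨n - 1, hbij.1 ?_⟩
      rw [hFs, sub_add_cancel, hn]
    · rintro ⟨n, rfl⟩
      exact ⟨n + 1, (hFs n).symm⟩
  have hBle : μ (Set.range F) ≤ ∑' d, μ {F d} := by
    have : Set.range F = ⋃ d, {F d} := by ext y; simp [eq_comm]
    rw [this]; exact measure_iUnion_le _
  rcases herg _ hBm hinv with h0 | h0
  · exact absurd (measure_mono_null (Set.singleton_subset_iff.2 (Set.mem_range_self 0)) h0) (hFpos 0)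
  · have : μ Set.univ ≤ μ (Set.range F) + μ (Set.univ \ Set.range F) := by
      refine (measure_mono ?_).trans (measure_union_le _ _)
      intro y _
      by_cases hy : y ∈ Set.range F
      · exact Or.inl hy
      · exact Or.inr ⟨trivial, hy⟩
    rw [h0, add_zero] at this
    exact ne_top_of_le_ne_top htsum (this.trans hBle)
end

section
/- Let (X, B, μ) be a σ-finite measure space, p ≥ 1, f : X → X injective, bimeasurable, and satisfying μ(f⁻¹(B)) ≤ c μ(B) for all measurable B and some c > 0. If the composition operator T_f on L^p(X) is frequently hypercyclic, then for every forward wandering set W with 0 < μ(W) < ∞ (i.e., W, f(W), f²(W), … pairwise disjoint), ∑_{n∈ℕ} ‖ dμ/d(μ∘fⁿ) |_W ‖_∞^{-1} < ∞. -/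
open MeasureTheory Set Filter
open scoped ENNReal NNReal

open Classical in
/-- Number of `m ∈ [1,N]` with `m ∈ E` and `m + k ∈ E`. -/
noncomputable def pairCnt (E : Set ℕ) (k N : ℕ) : ℕ :=
  ((Finset.Icc 1 N).filter (fun m => m ∈ E ∧ m + k ∈ E)).card

open Classical in
noncomputable def headF (E : Set ℕ) (N : ℕ) : Finset ℕ :=
  (Finset.Icc 1 N).filter (fun m => m ∈ E)

open Classical in
noncomputable def unionF (E : Set ℕ) (t : Finset ℕ) (N : ℕ) : Finset ℕ :=
  t.biUnion (fun i => (headF E N).image (fun m => m + i))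

lemma inter_card (E : Set ℕ) (s i N : ℕ) (h : i ≤ s) :
    (((headF E N).image (fun m => m + s)) ∩ ((headF E N).image (fun m => m + i))).card
      ≤ pairCnt E (s - i) N := by
  classical
  have : (((headF E N).image (fun m => m + s)) ∩ ((headF E N).image (fun m => m + i))) ⊆
      ((Finset.Icc 1 N).filter (fun m => m ∈ E ∧ m + (s-i) ∈ E)).image (fun m => m + s) := by
    intro x hx
    simp only [headF, Finset.mem_inter, Finset.mem_image, Finset.mem_filter] at hx ⊢
    obtain ⟨⟨a, ⟨ha1, ha2⟩, rfl⟩, ⟨b, ⟨hb1, hb2⟩, hb⟩⟩ := hx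
    refine ⟨a, ⟨ha1, ha2, ?_⟩, rfl⟩
    have : a + (s - i) = b := by omega
    rwa [this]
  refine (Finset.card_le_card this).trans (Finset.card_image_le.trans ?_)
  unfold pairCnt
  convert le_rfl

lemma union_step (E : Set ℕ) (t : Finset ℕ) (s N : ℕ) (b : ℝ)
    (hs : ∀ i ∈ t, i ≤ s) (hb : ∀ i ∈ t, (pairCnt E (s - i) N : ℝ) ≤ b) :
    ((unionF E t N).card : ℝ) + (headF E N).card ≤ (unionF E (insert s t) N).card + t.card * b := by
  classical
  have h1 : unionF E (insert s t) N = (headF E N).image (fun m => m + s) ∪ unionF E t N := by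
    unfold unionF
    rw [Finset.biUnion_insert]
  have h2 := Finset.card_union_add_card_inter ((headF E N).image (fun m => m + s)) (unionF E t N)
  have h3 : ((headF E N).image (fun m => m + s)).card = (headF E N).card :=
    Finset.card_image_of_injective _ (add_left_injective s)
  have h4 : (((headF E N).image (fun m => m + s) ∩ unionF E t N).card : ℝ) ≤ t.card * b := by
    have : (headF E N).image (fun m => m + s) ∩ unionF E t N =
      t.biUnion (fun i => (headF E N).image (fun m => m + s) ∩ (headF E N).image (fun m => m + i)) := by
      unfold unionF
      rw [Finset.inter_biUnion]
    rw [this]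
    calc _ ≤ ((∑ i ∈ t, ((headF E N).image (fun m => m + s) ∩ (headF E N).image (fun m => m + i)).card : ℕ) : ℝ) := by
            exact_mod_cast Finset.card_biUnion_le
      _ = ∑ i ∈ t, (((headF E N).image (fun m => m + s) ∩ (headF E N).image (fun m => m + i)).card : ℝ) := by
            push_cast; rfl
      _ ≤ ∑ i ∈ t, b := Finset.sum_le_sum fun i hi =>
            (Nat.cast_le.2 (inter_card E s i N (hs i hi))).trans (hb i hi)
      _ = _ := by simp
  rw [← h1, h3] at h2
  have h5 : ((unionF E (insert s t) N).card : ℝ) + (((headF E N).image (fun m => m + s) ∩ unionF E t N).card : ℝ) = (headF E N).card + (unionF E t N).card := by exact_mod_cast h2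
  linarith

lemma union_card_le (E : Set ℕ) (t : Finset ℕ) (N : ℕ) :
    (unionF E t N).card ≤ N + t.sup id := by
  classical
  have : unionF E t N ⊆ Finset.Icc 1 (N + t.sup id) := by
    intro x hx
    simp only [unionF, headF, Finset.mem_biUnion, Finset.mem_image, Finset.mem_filter, Finset.mem_Icc] at hx ⊢
    obtain ⟨i, hi, a, ⟨⟨h1, h2⟩, h3⟩, rfl⟩ := hx
    have : i ≤ t.sup id := Finset.le_sup (f := id) hi
    omega
  simpa using Finset.card_le_card this

lemma pairCnt_zero (E : Set ℕ) (N : ℕ) : pairCnt E 0 N = (headF E N).card := by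
  unfold pairCnt headF
  congr 1
  ext m
  simp

/-- the set of frequent differences (along the hyperfilter) is syndetic -/
lemma syndetic (E : Set ℕ) (δ : ℝ) (hδ : 0 < δ)
    (hE : ∀ᶠ N : ℕ in atTop, δ * N ≤ (headF E N).card) :
    ∃ ε : ℝ, 0 < ε ∧ ∃ t : Finset ℕ, ∀ k : ℕ, ∃ i ∈ t,
      ∀ᶠ N : ℕ in (hyperfilter ℕ : Filter ℕ), ε * N ≤ pairCnt E (k + t.sup id - i) N := by
  classical
  obtain ⟨r, hr⟩ := exists_nat_gt (2 / δ)
  have hr0 : (0:ℝ) < r := lt_trans (by positivity) hr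
  have hrδ : 2 < r * δ := by rwa [div_lt_iff₀ hδ] at hr
  obtain ⟨ε, hε, hε1, hε2⟩ : ∃ ε : ℝ, 0 < ε ∧ ε ≤ δ ∧ r ^ 2 * ε ≤ 1/2 := by
    refine ⟨min δ (1 / (2 * r^2)), by positivity, min_le_left _ _, ?_⟩
    calc (r:ℝ)^2 * min δ (1 / (2 * r^2)) ≤ r^2 * (1 / (2 * r^2)) := by
          gcongr; exact min_le_right _ _
      _ = 1/2 := by field_simp
  have hE' : ∀ᶠ N : ℕ in (hyperfilter ℕ : Filter ℕ), δ * N ≤ (headF E N).card :=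
    Nat.hyperfilter_le_atTop hE
  refine ⟨ε, hε, ?_⟩
  by_contra hcon
  push Not at hcon
  have key : ∀ n : ℕ, ∃ t : Finset ℕ, t.card = n ∧
      ∀ᶠ N : ℕ in (hyperfilter ℕ : Filter ℕ),
        n * ((headF E N).card : ℝ) ≤ (unionF E t N).card + n ^ 2 * (ε * N) := by
    intro n
    induction n with
    | zero => exact ⟨∅, rfl, by simp⟩
    | succ n ih =>
      obtain ⟨t, ht, hN⟩ := ih
      obtain ⟨k, hk⟩ := hcon t
      have hs : k + t.sup id ∉ t := by
        intro hmem
        obtain ⟨N, hN1, hN2⟩ := ((hk _ hmem).and hE').exists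
        rw [Nat.sub_self, pairCnt_zero] at hN1
        have : ε * N ≤ δ * N := by gcongr
        linarith
      refine ⟨insert (k + t.sup id) t, by rw [Finset.card_insert_of_notMem hs, ht], ?_⟩
      have h2 : ∀ᶠ N : ℕ in (hyperfilter ℕ : Filter ℕ), ∀ i ∈ t,
          (pairCnt E (k + t.sup id - i) N : ℝ) ≤ ε * N := by
        rw [Filter.eventually_all_finset]
        intro i hi
        filter_upwards [hk i hi] with N hN
        exact hN.le
      filter_upwards [hN, h2] with N h3 h4
      have h5 := union_step E t (k + t.sup id) N (ε * N)
        (fun i hi => (Finset.le_sup (f := id) hi).trans (Nat.le_add_left _ _)) h4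
      rw [ht] at h5
      push_cast
      have : 0 ≤ ε * N := by positivity
      nlinarith [mul_nonneg (Nat.cast_nonneg (α := ℝ) n) this]
  obtain ⟨t, ht, hN⟩ := key r
  have hbig : ∀ᶠ N : ℕ in (hyperfilter ℕ : Filter ℕ), 2 * (t.sup id) + 1 ≤ N :=
    Nat.hyperfilter_le_atTop (eventually_ge_atTop _)
  obtain ⟨N, h1, h2, h3⟩ := (hN.and (hE'.and hbig)).exists
  have h4 : ((unionF E t N).card : ℝ) ≤ N + (t.sup id : ℕ) := by exact_mod_cast union_card_le E t N
  have h5 : (2:ℝ) * ((t.sup id : ℕ):ℝ) + 1 ≤ N := by exact_mod_cast h3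
  have hN0 : (0:ℝ) ≤ N := by positivity
  have h6 : (r:ℝ)^2 * (ε * N) ≤ 1/2 * N := by
    rw [← mul_assoc]; gcongr
  have h7 : 2 * (N:ℝ) ≤ r * (headF E N).card := by
    calc 2 * (N:ℝ) ≤ (r * δ) * N := by gcongr
      _ = r * (δ * N) := by ring
      _ ≤ _ := by gcongr
  linarith

open Classical in
lemma comb_s18 (E : Set ℕ) (δ : ℝ) (hδ : 0 < δ)
    (hE : ∀ᶠ N : ℕ in atTop, δ * N ≤ (headF E N).card)
    (d : ℕ → ℝ) (hd : ∀ k, 0 ≤ d k) (c : ℝ) (hc : 1 ≤ c) (hdc : ∀ k, d k ≤ c * d (k+1))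
    (C : ℝ) (hC0 : 0 ≤ C)
    (hC : ∀ m ∈ E, ∀ K : ℕ, ∑ k ∈ (Finset.range K).filter (fun k => m + k ∈ E), d k ≤ C) :
    Summable d := by
  obtain ⟨ε, hε, t, ht⟩ := syndetic E δ hδ hE
  set F : Set ℕ := {k | ∀ᶠ N : ℕ in (hyperfilter ℕ : Filter ℕ), ε * N ≤ pairCnt E k N} with hF
  have hsumF : ∀ K : ℕ, ∑ k ∈ (Finset.range K).filter (· ∈ F), d k ≤ C / ε := by
    intro K
    have h1 : ∀ᶠ N : ℕ in (hyperfilter ℕ : Filter ℕ),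
        ∀ k ∈ (Finset.range K).filter (· ∈ F), ε * N ≤ pairCnt E k N := by
      rw [Filter.eventually_all_finset]
      intro k hk
      exact (Finset.mem_filter.1 hk).2
    have hbig : ∀ᶠ N : ℕ in (hyperfilter ℕ : Filter ℕ), 1 ≤ N :=
      Nat.hyperfilter_le_atTop (eventually_ge_atTop _)
    obtain ⟨N, h1, h2⟩ := (h1.and hbig).exists
    have hN : (0:ℝ) < N := by exact_mod_cast h2
    have h3 : ∑ k ∈ Finset.range K, d k * pairCnt E k N ≤ C * N := by
      calc ∑ k ∈ Finset.range K, d k * pairCnt E k N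
          = ∑ k ∈ Finset.range K, ∑ m ∈ Finset.Icc 1 N, if m ∈ E ∧ m + k ∈ E then d k else 0 := by
            refine Finset.sum_congr rfl fun k _ => ?_
            rw [← Finset.sum_filter, Finset.sum_const, nsmul_eq_mul, mul_comm]
            rfl
        _ = ∑ m ∈ Finset.Icc 1 N, ∑ k ∈ Finset.range K, if m ∈ E ∧ m + k ∈ E then d k else 0 :=
            Finset.sum_comm
        _ ≤ ∑ m ∈ Finset.Icc 1 N, C := by
            refine Finset.sum_le_sum fun m _ => ?_
            by_cases hm : m ∈ E
            · simp only [hm, true_and]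
              rw [← Finset.sum_filter]
              exact hC m hm K
            · simpa [hm] using hC0
        _ = C * N := by simp [mul_comm]
    rw [le_div_iff₀ hε]
    refine le_of_mul_le_mul_right ?_ hN
    refine le_trans ?_ h3
    rw [mul_assoc, Finset.sum_mul]
    refine le_trans (Finset.sum_le_sum fun k hk => mul_le_mul_of_nonneg_left (h1 k hk) (hd k)) ?_
    exact Finset.sum_le_sum_of_subset_of_nonneg (Finset.filter_subset _ _)
      fun k _ _ => mul_nonneg (hd k) (by positivity)
  have hpow : ∀ k j, d k ≤ c ^ j * d (k + j) := by
    intro k j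
    induction j with
    | zero => simp
    | succ j ih =>
      refine ih.trans ?_
      rw [pow_succ, mul_assoc]
      gcongr
      exact hdc _
  set M := t.sup id with hM
  have hc0 : 0 ≤ c := by linarith
  have hpt : ∀ k, d k ≤ c ^ M * ∑ i ∈ t, (if k + M - i ∈ F then d (k + M - i) else 0) := by
    intro k
    obtain ⟨i, hi, hk⟩ := ht k
    have hiM : i ≤ M := Finset.le_sup (f := id) hi
    have h1 : d (k + M - i) ≤ ∑ i ∈ t, (if k + M - i ∈ F then d (k + M - i) else 0) := by
      refine le_trans ?_ (Finset.single_le_sum (f := fun i => if k + M - i ∈ F then d (k + M - i) else 0) ?_ hi)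
      · have : k + M - i ∈ F := hk
        simp [this]
      · intro i _
        split_ifs
        · exact hd _
        · exact le_rfl
    have h2 := hpow k (M - i)
    have h3 : k + (M - i) = k + M - i := by omega
    rw [h3] at h2
    refine h2.trans ?_
    gcongr
    · exact hd _
    · omega
  refine summable_of_sum_range_le (c := c ^ M * (t.card * (C / ε))) hd fun K => ?_
  calc ∑ k ∈ Finset.range K, d k
      ≤ ∑ k ∈ Finset.range K, c ^ M * ∑ i ∈ t, (if k + M - i ∈ F then d (k + M - i) else 0) :=
        Finset.sum_le_sum fun k _ => hpt k
    _ = c ^ M * ∑ i ∈ t, ∑ k ∈ Finset.range K, (if k + M - i ∈ F then d (k + M - i) else 0) := by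
        rw [← Finset.mul_sum, Finset.sum_comm]
    _ ≤ c ^ M * ∑ i ∈ t, (C / ε) := by
        gcongr with i hi
        have hiM : i ≤ M := Finset.le_sup (f := id) hi
        refine le_trans ?_ (hsumF (K + M))
        rw [Finset.sum_filter, ← Finset.sum_image (s := Finset.range K) (g := fun k => k + M - i)
          (f := fun j => if j ∈ F then d j else 0)]
        · refine Finset.sum_le_sum_of_subset_of_nonneg ?_ ?_
          · intro x hx
            simp only [Finset.mem_image, Finset.mem_range] at hx ⊢
            omega
          · intro j _ _
            split_ifs
            · exact hd _
            · exact le_rfl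
        · intro a _ b _ hab
          simp only at hab
          omega
    _ = _ := by simp

lemma ess_upper {X : Type*} [MeasurableSpace X] (μ ν : Measure X) [SigmaFinite μ] [SigmaFinite ν]
    (hac : μ ≪ ν) (W : Set X) (hW : MeasurableSet W) (B : Set X) (hB : MeasurableSet B)
    (hBW : B ⊆ W) : μ B ≤ essSup (μ.rnDeriv ν) (μ.restrict W) * ν B := by
  set S := essSup (μ.rnDeriv ν) (μ.restrict W) with hS
  have h1 : ∀ᵐ x ∂μ, x ∈ W → μ.rnDeriv ν x ≤ S :=
    (ae_restrict_iff' hW).1 (ae_le_essSup (f := μ.rnDeriv ν) (μ := μ.restrict W))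
  have hG : MeasurableSet {x | μ.rnDeriv ν x ≤ S} :=
    measurableSet_le (Measure.measurable_rnDeriv _ _) measurable_const
  calc μ B ≤ μ (B ∩ {x | μ.rnDeriv ν x ≤ S}) := by
        apply measure_mono_ae
        filter_upwards [h1] with x hx hxB
        exact ⟨hxB, hx (hBW hxB)⟩
    _ = ∫⁻ x in B ∩ {x | μ.rnDeriv ν x ≤ S}, μ.rnDeriv ν x ∂ν :=
        (Measure.setLIntegral_rnDeriv hac _).symm
    _ ≤ ∫⁻ x in B ∩ {x | μ.rnDeriv ν x ≤ S}, S ∂ν :=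
        setLIntegral_mono' (hB.inter hG) fun x hx => hx.2
    _ = S * ν (B ∩ {x | μ.rnDeriv ν x ≤ S}) := by simp
    _ ≤ S * ν B := by gcongr; exact inter_subset_left

lemma ess_lower {X : Type*} [MeasurableSpace X] (μ ν : Measure X) [SigmaFinite μ] [SigmaFinite ν]
    (hac : μ ≪ ν) (W : Set X) (hW : MeasurableSet W) (a : ℝ≥0∞)
    (h : ∀ B, MeasurableSet B → B ⊆ W → μ B ≤ a * ν B) :
    essSup (μ.rnDeriv ν) (μ.restrict W) ≤ a := by
  have h1 : W.indicator (μ.rnDeriv ν) ≤ᵐ[ν] fun _ => a := by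
    refine ae_le_of_forall_setLIntegral_le_of_sigmaFinite
      ((Measure.measurable_rnDeriv _ _).indicator hW) fun s hs _ => ?_
    rw [setLIntegral_indicator hW, Measure.setLIntegral_rnDeriv hac, setLIntegral_const]
    refine (h _ (hW.inter hs) inter_subset_left).trans ?_
    gcongr
    exact inter_subset_right
  refine essSup_le_of_ae_le _ ?_
  refine (ae_restrict_iff' hW).2 ?_
  filter_upwards [hac.ae_le h1] with x hx hxW
  simpa [hxW] using hx

lemma ess_ne_zero {X : Type*} [MeasurableSpace X] (μ ν : Measure X) [SigmaFinite μ] [SigmaFinite ν]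
    (hac : μ ≪ ν) (W : Set X) (hW : MeasurableSet W) (hW0 : 0 < μ W) :
    essSup (μ.rnDeriv ν) (μ.restrict W) ≠ 0 := by
  intro h0
  have := ess_upper μ ν hac W hW W hW subset_rfl
  rw [h0, zero_mul] at this
  exact absurd hW0 (not_lt.2 this)

lemma dSeq_mul_le {X : Type*} [MeasurableSpace X] (μ ν : Measure X) [SigmaFinite μ] [SigmaFinite ν]
    (hac : μ ≪ ν) (W : Set X) (hW : MeasurableSet W) (hW0 : 0 < μ W) (B : Set X)
    (hB : MeasurableSet B) (hBW : B ⊆ W) : dSeq μ ν W * μ B ≤ ν B := by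
  unfold dSeq
  by_cases ht : essSup (μ.rnDeriv ν) (μ.restrict W) = ⊤
  · simp [ht]
  rw [ENNReal.inv_mul_le_iff (ess_ne_zero μ ν hac W hW hW0) ht]
  exact ess_upper μ ν hac W hW B hB hBW

theorem stmt_18 {X : Type*} [MeasurableSpace X] (μ : Measure X) [SigmaFinite μ]
    (f : X → X) (hinj : Function.Injective f) (hmeas : Measurable f)
    (himg : ∀ B : Set X, MeasurableSet B → MeasurableSet (f '' B))
    (c : ℝ≥0∞) (hc0 : 0 < c) (hc : c ≠ ⊤)
    (hbound : ∀ B : Set X, MeasurableSet B → μ (f ⁻¹' B) ≤ c * μ B)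
    (p : ℝ≥0∞) [Fact (1 ≤ p)] (hp : p ≠ ⊤)
    (T : Lp ℝ p μ →L[ℝ] Lp ℝ p μ)
    (hT : ∀ φ : Lp ℝ p μ, (T φ : X → ℝ) =ᵐ[μ] fun x => (φ : X → ℝ) (f x))
    (hfh : FreqHC T)
    (W : Set X) (hWm : MeasurableSet W) (hW0 : 0 < μ W) (hWfin : μ W ≠ ⊤)
    (hWw : Pairwise fun m n : ℕ => Disjoint (f^[m] '' W) (f^[n] '' W))
    (ν : ℕ → Measure X) (hν : ∀ (n : ℕ) (B : Set X), MeasurableSet B → ν n B = μ (f^[n] '' B)) :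
    ∑' n : ℕ, dSeq μ (ν n) W ≠ ⊤ := by
  classical
  have hp1 : 1 ≤ p := Fact.out
  have hp0 : p ≠ 0 := (lt_of_lt_of_le zero_lt_one hp1).ne'
  set q := p.toReal with hq
  have hq0 : 0 < q := ENNReal.toReal_pos hp0 hp
  have himgn : ∀ n (B : Set X), MeasurableSet B → MeasurableSet (f^[n] '' B) := by
    intro n
    induction n with
    | zero => intro B hB; simpa using hB
    | succ n ih =>
      intro B hB
      rw [Function.iterate_succ, image_comp]
      exact ih _ (himg B hB)
  have hinjn : ∀ n, Function.Injective f^[n] := fun n => hinj.iterate n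
  have hmeasn : ∀ n, Measurable f^[n] := fun n => hmeas.iterate n
  have hstep : ∀ n (B : Set X), MeasurableSet B → ν n B ≤ c * ν (n+1) B := by
    intro n B hB
    rw [hν n B hB, hν (n+1) B hB, Function.iterate_succ', image_comp]
    refine le_trans (le_of_eq ?_) (hbound _ (himg _ (himgn n B hB)))
    rw [preimage_image_eq _ hinj]
  have hν0 : ∀ B, MeasurableSet B → ν 0 B = μ B := fun B hB => by simp [hν 0 B hB]
  have hsf : ∀ n, SigmaFinite (ν n) := by
    intro n
    refine ⟨⟨⟨fun i => f^[n] ⁻¹' (spanningSets μ i), fun _ => trivial, fun i => ?_, ?_⟩⟩⟩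
    · rw [hν n _ ((hmeasn n) (measurableSet_spanningSets μ i))]
      exact lt_of_le_of_lt (measure_mono (image_preimage_subset _ _)) (measure_spanningSets_lt_top μ i)
    · rw [← preimage_iUnion, iUnion_spanningSets, preimage_univ]
  have hac : ∀ n, μ ≪ ν n := by
    intro n
    refine Measure.AbsolutelyContinuous.mk fun s hs h => ?_
    induction n with
    | zero => rwa [hν0 s hs] at h
    | succ n ih =>
      apply ih
      have := hstep n s hs
      rw [h, mul_zero] at this
      exact le_antisymm this bot_le
  -- properties of d
  have hdfin : ∀ n, dSeq μ (ν n) W ≠ ⊤ := fun n =>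
    ENNReal.inv_ne_top.2 (ess_ne_zero μ (ν n) (hac n) W hWm hW0)
  have hdmul : ∀ n B, MeasurableSet B → B ⊆ W → dSeq μ (ν n) W * μ B ≤ μ (f^[n] '' B) :=
    fun n B hB hBW => (dSeq_mul_le μ (ν n) (hac n) W hWm hW0 B hB hBW).trans (hν n B hB).le
  have hdc : ∀ n, dSeq μ (ν n) W ≤ c * dSeq μ (ν (n+1)) W := by
    intro n
    have h1 : essSup (μ.rnDeriv (ν (n+1))) (μ.restrict W) ≤
        essSup (μ.rnDeriv (ν n)) (μ.restrict W) * c := by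
      refine ess_lower μ (ν (n+1)) (hac _) W hWm _ fun B hB hBW => ?_
      rw [mul_assoc]
      exact (ess_upper μ (ν n) (hac n) W hWm B hB hBW).trans (by gcongr; exact hstep n B hB)
    unfold dSeq
    calc (essSup (μ.rnDeriv (ν n)) (μ.restrict W))⁻¹
        = c * (essSup (μ.rnDeriv (ν n)) (μ.restrict W) * c)⁻¹ := by
          rw [ENNReal.mul_inv (Or.inr hc) (Or.inr hc0.ne'), mul_comm, mul_assoc,
            ENNReal.inv_mul_cancel hc0.ne' hc, mul_one]
      _ ≤ _ := by gcongr
  -- dynamics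
  obtain ⟨φ, hφ⟩ := hfh
  have hqmp : Measure.QuasiMeasurePreserving f μ μ := by
    refine ⟨hmeas, Measure.AbsolutelyContinuous.mk fun s hs h => ?_⟩
    rw [Measure.map_apply hmeas hs]
    have := hbound s hs
    rw [h, mul_zero] at this
    exact le_antisymm this bot_le
  have hTn : ∀ n, ((T ^ n) φ : X → ℝ) =ᵐ[μ] (φ : X → ℝ) ∘ f^[n] := by
    intro n
    induction n with
    | zero => simp
    | succ n ih =>
      rw [pow_succ', Function.iterate_succ, ← Function.comp_assoc]
      exact (hT ((T^n) φ)).trans (hqmp.ae_eq_comp ih)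
  have hφm : Measurable (φ : X → ℝ) := (Lp.stronglyMeasurable φ).measurable
  set e : Lp ℝ p μ := indicatorConstLp p hWm hWfin (1:ℝ) with he
  set η : ℝ≥0∞ := (μ W / 2) ^ q⁻¹ / 2 with hη
  have hη0 : 0 < η := by
    apply ENNReal.div_pos _ (by simp)
    have : 0 < μ W / 2 := ENNReal.half_pos hW0.ne'
    exact (ENNReal.rpow_pos this (ENNReal.div_ne_top hWfin (by simp))).ne'
  set E : Set ℕ := {n : ℕ | (T ^ n) φ ∈ Metric.eball e η} with hE
  have hdens := hφ (Metric.eball e η) Metric.isOpen_eball ⟨e, Metric.mem_eball_self hη0⟩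
  obtain ⟨δ, hδ, hδE⟩ : ∃ δ : ℝ, 0 < δ ∧ ∀ᶠ N : ℕ in atTop, δ * N ≤ (headF E N).card := by
    obtain ⟨δ, hδ, h⟩ := exists_between hdens
    refine ⟨δ, hδ, ?_⟩
    have hb : IsBoundedUnder (· ≥ ·) atTop
        (fun N : ℕ => ((E ∩ Set.Icc 1 N).ncard : ℝ) / N) :=
      isBoundedUnder_of ⟨0, fun N => by positivity⟩
    filter_upwards [eventually_lt_of_lt_liminf h hb, eventually_gt_atTop 0] with N h1 h2
    have h3 : (E ∩ Set.Icc 1 N).ncard = (headF E N).card := by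
      rw [← Set.ncard_coe_finset]
      congr 1
      ext m
      simp [headF, and_comm]
    have h4 : (0:ℝ) < N := by exact_mod_cast h2
    have h5 := (lt_div_iff₀ h4).1 h1
    rw [← h3]
    exact h5.le
  set Bs : ℕ → Set X := fun n => W ∩ {x | (1/2 : ℝ≥0∞) ≤ ‖(φ : X → ℝ) (f^[n] x)‖ₑ} with hBs
  have hBm : ∀ n, MeasurableSet (Bs n) := fun n =>
    hWm.inter (measurableSet_le measurable_const (hφm.comp (hmeasn n)).enorm)
  have hhalf : (1/2 : ℝ≥0∞) ≠ 0 := by simp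
  have hhalf' : (1/2 : ℝ≥0∞) ≠ ⊤ := by simp
  have hBmeas : ∀ n ∈ E, μ W / 2 ≤ μ (Bs n) := by
    intro n hn
    have h1 : eLpNorm ((((T ^ n) φ - e : Lp ℝ p μ)) : X → ℝ) p μ ≤ η := by
      rw [← Lp.enorm_def, ← edist_eq_enorm_sub]
      exact (Metric.mem_eball.1 hn).le
    have h2 := meas_ge_le_mul_pow_eLpNorm_enorm μ hp0 hp
      (Lp.aestronglyMeasurable ((T ^ n) φ - e)) hhalf (fun h => absurd h hhalf')
    have h3 : μ {x | (1/2 : ℝ≥0∞) ≤ ‖(((T ^ n) φ - e : Lp ℝ p μ) : X → ℝ) x‖ₑ} ≤ μ W / 2 := by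
      refine h2.trans ?_
      rw [← ENNReal.mul_rpow_of_nonneg _ _ hq0.le]
      calc _ ≤ ((1/2 : ℝ≥0∞)⁻¹ * η) ^ q := by gcongr
        _ = ((μ W / 2) ^ q⁻¹) ^ q := by
            congr 1
            rw [hη, one_div, inv_inv, ENNReal.mul_div_cancel (by simp) (by simp)]
        _ = μ W / 2 := ENNReal.rpow_inv_rpow hq0.ne' _
    have h4 : μ W ≤ μ (Bs n) + μ {x | (1/2 : ℝ≥0∞) ≤ ‖(((T ^ n) φ - e : Lp ℝ p μ) : X → ℝ) x‖ₑ} := by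
      refine le_trans (measure_mono_ae ?_) (measure_union_le _ _)
      filter_upwards [hTn n, Lp.coeFn_sub ((T ^ n) φ) e,
        indicatorConstLp_coeFn (p := p) (hs := hWm) (hμs := hWfin) (c := (1:ℝ))] with x hx1 hx2 hx3 hxW
      have hxW' : x ∈ W := hxW
      by_cases hx : (1/2 : ℝ≥0∞) ≤ ‖(φ : X → ℝ) (f^[n] x)‖ₑ
      · exact Or.inl ⟨hxW, hx⟩
      · right
        show (1/2 : ℝ≥0∞) ≤ ‖(((T ^ n) φ - e : Lp ℝ p μ) : X → ℝ) x‖ₑ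
        rw [hx2, Pi.sub_apply, hx1, he, hx3, indicator_of_mem hxW', Function.comp_apply]
        have hh : (1/2 : ℝ≥0∞) = ENNReal.ofReal (1/2) := by
          rw [ENNReal.ofReal_div_of_pos (by norm_num)]; simp
        rw [hh, ← ofReal_norm_eq_enorm, ENNReal.ofReal_le_ofReal_iff (norm_nonneg _),
          Real.norm_eq_abs] at hx ⊢
        rw [not_le, abs_lt] at hx
        rw [le_abs]
        right
        linarith [hx.2]
    have h5 : μ W / 2 + μ W / 2 ≤ μ (Bs n) + μ W / 2 := by
      rw [ENNReal.add_halves]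
      exact h4.trans (by gcongr)
    exact (ENNReal.add_le_add_iff_right (ENNReal.div_ne_top hWfin (by simp))).1 h5
  set C1 : ℝ≥0∞ := (1/2 : ℝ≥0∞)⁻¹ ^ q * (‖e‖ₑ + η) ^ q with hC1
  have hηt : η ≠ ⊤ := by
    apply ENNReal.div_ne_top _ (by simp)
    exact ENNReal.rpow_ne_top_of_nonneg (by positivity) (ENNReal.div_ne_top hWfin (by simp))
  have hC1t : C1 ≠ ⊤ := by
    apply ENNReal.mul_ne_top
    · exact ENNReal.rpow_ne_top_of_nonneg hq0.le (by simp)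
    · exact ENNReal.rpow_ne_top_of_nonneg hq0.le (ENNReal.add_ne_top.2 ⟨enorm_ne_top, hηt⟩)
  have hsum : ∀ m ∈ E, ∀ K : ℕ,
      ∑ k ∈ (Finset.range K).filter (fun k => m + k ∈ E), dSeq μ (ν k) W ≤ C1 / (μ W / 2) := by
    intro m hm K
    have hWh : μ W / 2 ≠ 0 := (ENNReal.half_pos hW0.ne').ne'
    have hWh' : μ W / 2 ≠ ⊤ := ENNReal.div_ne_top hWfin (by simp)
    rw [ENNReal.le_div_iff_mul_le (Or.inl hWh) (Or.inl hWh'), Finset.sum_mul]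
    calc ∑ k ∈ (Finset.range K).filter (fun k => m + k ∈ E), dSeq μ (ν k) W * (μ W / 2)
        ≤ ∑ k ∈ (Finset.range K).filter (fun k => m + k ∈ E), μ (f^[k] '' Bs (m + k)) := by
          refine Finset.sum_le_sum fun k hk => ?_
          refine le_trans ?_ (hdmul k (Bs (m+k)) (hBm _) inter_subset_left)
          gcongr
          exact hBmeas _ (Finset.mem_filter.1 hk).2
      _ = μ (⋃ k ∈ (Finset.range K).filter (fun k => m + k ∈ E), f^[k] '' Bs (m + k)) := by
          rw [measure_biUnion_finset]
          · intro i _ j _ hij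
            exact (hWw hij).mono (image_mono inter_subset_left) (image_mono inter_subset_left)
          · exact fun k _ => himgn k _ (hBm _)
      _ ≤ μ {x | (1/2 : ℝ≥0∞) ≤ ‖((T ^ m) φ : X → ℝ) x‖ₑ} := by
          apply measure_mono_ae
          filter_upwards [hTn m] with x hx hxU
          obtain ⟨k, hk, y, hy, rfl⟩ := by simpa only [mem_iUnion, exists_prop] using mem_iUnion₂.1 hxU
          show (1/2 : ℝ≥0∞) ≤ ‖((T ^ m) φ : X → ℝ) (f^[k] y)‖ₑ
          rw [hx, Function.comp_apply, ← Function.iterate_add_apply]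
          exact hy.2
      _ ≤ (1/2 : ℝ≥0∞)⁻¹ ^ q * eLpNorm ((T ^ m) φ : X → ℝ) p μ ^ q :=
          meas_ge_le_mul_pow_eLpNorm_enorm μ hp0 hp
            (Lp.aestronglyMeasurable ((T ^ m) φ)) hhalf (fun h => absurd h hhalf')
      _ ≤ C1 := by
          rw [hC1]
          gcongr
          rw [← Lp.enorm_def]
          calc ‖(T ^ m) φ‖ₑ = ‖e + ((T ^ m) φ - e)‖ₑ := by rw [add_sub_cancel]
            _ ≤ ‖e‖ₑ + ‖(T ^ m) φ - e‖ₑ := enorm_add_le _ _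
            _ ≤ _ := by
              gcongr
              rw [← edist_eq_enorm_sub]
              exact (Metric.mem_eball.1 hm).le
  have hCt : C1 / (μ W / 2) ≠ ⊤ :=
    ENNReal.div_ne_top hC1t (ENNReal.half_pos hW0.ne').ne'
  have hS := comb_s18 E δ hδ hδE (fun n => (dSeq μ (ν n) W).toReal) (fun _ => ENNReal.toReal_nonneg)
    (max c.toReal 1) (le_max_right _ _) (fun k => by
      calc (dSeq μ (ν k) W).toReal ≤ (c * dSeq μ (ν (k+1)) W).toReal :=
            ENNReal.toReal_mono (ENNReal.mul_ne_top hc (hdfin _)) (hdc k)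
        _ = c.toReal * (dSeq μ (ν (k+1)) W).toReal := ENNReal.toReal_mul
        _ ≤ _ := by
          gcongr
          exact le_max_left _ _) (C1 / (μ W / 2)).toReal ENNReal.toReal_nonneg (fun m hm K => by
      rw [← ENNReal.toReal_sum (fun k _ => hdfin k)]
      refine ENNReal.toReal_mono hCt ?_
      convert hsum m hm K)
  have := ENNReal.ofReal_tsum_of_nonneg (fun n => ENNReal.toReal_nonneg) hS
  simp only [ENNReal.ofReal_toReal (hdfin _)] at this
  rw [← this]
  exact ENNReal.ofReal_ne_top
end
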